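/- Let Ω₀ ⊆ ℝ^{p+1} be a domain and f₀ ∈ C^ω(Ω₀, 𝔸) a real analytic function. Then D̄_x (HGCK[f₀, 0]) = GCK[D̄_{x_p} f₀] and D̄_x (HGCK[0, f₀]) = q · GCK[f₀]. -/

import Mathlib

open scoped BigOperators
open Filter Topology

namespace GPSM

variable (A : Type*) [NormedAddCommGroup A] [NormedSpace ℝ A] [Mul A] [One A]

/-- `A` is a real alternative algebra with unit `1`, of finite dimension `d > 1`,
equipped with an anti-involution `conj` (a real-linear map with `(a^c)^c = a`,
`(ab)^c = b^c a^c`, fixing the reals).  The associator is alternating (left/right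
alternative laws). -/
structure IsAltStarAlg (conj : A → A) : Prop where
  finDim : FiniteDimensional ℝ A
  one_lt_finrank : 1 < Module.finrank ℝ A
  mul_add' : ∀ a b c : A, a * (b + c) = a * b + a * c
  add_mul' : ∀ a b c : A, (a + b) * c = a * c + b * c
  smul_mul' : ∀ (r : ℝ) (a b : A), (r • a) * b = r • (a * b)
  mul_smul' : ∀ (r : ℝ) (a b : A), a * (r • b) = r • (a * b)
  one_mul' : ∀ a : A, 1 * a = a
  mul_one' : ∀ a : A, a * 1 = a
  alt_left : ∀ a b : A, a * (a * b) = a * a * b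
  alt_right : ∀ a b : A, a * b * b = a * (b * b)
  conj_add : ∀ a b : A, conj (a + b) = conj a + conj b
  conj_smul : ∀ (r : ℝ) (a : A), conj (r • a) = r • conj a
  conj_conj : ∀ a : A, conj (conj a) = a
  conj_mul : ∀ a b : A, conj (a * b) = conj b * conj a
  conj_one : conj 1 = 1

/-- `v 0, v 1, …, v m` is a hypercomplex basis of the hypercomplex subspace
`M = span(v 0, …, v m)` of `A`: `v 0 = 1`, `t(v s) = 0`, `n(v s) = 1`, the `v s`
anticommute for distinct `s, t ∈ {1,…,m}`, they are linearly independent, and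
`M` is contained in the quadratic cone `Q_A`. -/
structure IsHypBasis (conj : A → A) (v : ℕ → A) (m : ℕ) : Prop where
  v_zero : v 0 = 1
  trace_zero : ∀ s, 1 ≤ s → s ≤ m → v s + conj (v s) = 0
  norm_one : ∀ s, 1 ≤ s → s ≤ m → v s * conj (v s) = 1
  anticomm : ∀ s t, 1 ≤ s → s ≤ m → 1 ≤ t → t ≤ m → s ≠ t → v s * v t = -(v t * v s)
  indep : LinearIndependent ℝ (fun i : Fin (m + 1) => v i)
  mem_cone : ∀ x ∈ Submodule.span ℝ (Set.range fun i : Fin (m + 1) => v (i : ℕ)),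
      ∃ tr nr : ℝ, x + conj x = tr • (1 : A) ∧ x * conj x = nr • (1 : A) ∧
        ((∃ r : ℝ, x = r • (1 : A)) ∨ tr ^ 2 < 4 * nr)

variable {A}

/-- Identification of `ℝ^{m+1}` with the hypercomplex subspace `M`:
`(x_0,…,x_m) ↦ Σ x_s • v s`. -/
def emb (v : ℕ → A) (m : ℕ) (x : Fin (m + 1) → ℝ) : A :=
  ∑ s : Fin (m + 1), x s • v (s : ℕ)

/-- First `p+1` coordinates of a point of `M ≅ ℝ^{m+1}`, i.e. the `x_p`-part. -/
def projP (m p : ℕ) (x : Fin (m + 1) → ℝ) : Fin (p + 1) → ℝ := fun s =>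
  if h : (s : ℕ) < m + 1 then x ⟨(s : ℕ), h⟩ else 0

/-- Inclusion `ℝ^{p+1} ⊆ ℝ^{m+1}` (remaining coordinates `0`). -/
def injP (m p : ℕ) (y : Fin (p + 1) → ℝ) : Fin (m + 1) → ℝ := fun s =>
  if h : (s : ℕ) < p + 1 then y ⟨(s : ℕ), h⟩ else 0

/-- The coordinates of `x_q` (last `q = m - p` coordinates of `x`). -/
def xqpart (m p : ℕ) (x : Fin (m + 1) → ℝ) : Fin (m + 1) → ℝ := fun s =>
  if (s : ℕ) ≤ p then 0 else x s

/-- The coordinates of `x_p` inside `ℝ^{m+1}`. -/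
def xppart (m p : ℕ) (x : Fin (m + 1) → ℝ) : Fin (m + 1) → ℝ := fun s =>
  if (s : ℕ) ≤ p then x s else 0

/-- `r = |x_q|`. -/
noncomputable def rad (m p : ℕ) (x : Fin (m + 1) → ℝ) : ℝ :=
  Real.sqrt (∑ s : Fin (m + 1), (xqpart m p x s) ^ 2)

/-- `ω = x_q / |x_q|` (coordinates), `0` when `x_q = 0`. -/
noncomputable def normq (m p : ℕ) (x : Fin (m + 1) → ℝ) : Fin (m + 1) → ℝ :=
  (rad m p x)⁻¹ • xqpart m p x

/-- The reflection `x = x_p + x_q ↦ x_⋄ = x_p - x_q`. -/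
def reflP (m p : ℕ) (x : Fin (m + 1) → ℝ) : Fin (m + 1) → ℝ := fun s =>
  if (s : ℕ) ≤ p then x s else -x s

/-- The sphere `𝕊 = {x_q ∈ span(v_{p+1},…,v_m) : x_q² = -1}`, in coordinates. -/
def Sph (v : ℕ → A) (m p : ℕ) : Set (Fin (m + 1) → ℝ) :=
  {w | (∀ s : Fin (m + 1), (s : ℕ) ≤ p → w s = 0) ∧ emb v m w * emb v m w = -1}

/-- The point `x_p + r ω` of `M ≅ ℝ^{m+1}`. -/
def pt (m p : ℕ) (w : Fin (m + 1) → ℝ) (y : Fin (p + 1) → ℝ) (r : ℝ) :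
    Fin (m + 1) → ℝ :=
  injP m p y + r • w

/-- The slice `Ω_ω ⊆ ℝ^{p+2}` of `Ω` at `ω`. -/
def sliceSet (m p : ℕ) (Ω : Set (Fin (m + 1) → ℝ)) (w : Fin (m + 1) → ℝ) :
    Set ((Fin (p + 1) → ℝ) × ℝ) := {z | pt m p w z.1 z.2 ∈ Ω}

/-- The restriction `f_ω` of `f` to the slice at `ω`, as a function on `ℝ^{p+2}`. -/
def sliceFun (m p : ℕ) (f : (Fin (m + 1) → ℝ) → A) (w : Fin (m + 1) → ℝ) :
    (Fin (p + 1) → ℝ) × ℝ → A := fun z => f (pt m p w z.1 z.2)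

/-- Partial derivative `∂_{x_s}` of a function on `ℝ^{m+1}`. -/
noncomputable def pdF (m : ℕ) (s : Fin (m + 1)) (f : (Fin (m + 1) → ℝ) → A)
    (x : Fin (m + 1) → ℝ) : A := fderiv ℝ f x (Pi.single s 1)

/-- Partial derivative `∂_{x_s}` of a function on `ℝ^{p+1}`. -/
noncomputable def pdP (p : ℕ) (s : Fin (p + 1)) (g : (Fin (p + 1) → ℝ) → A)
    (y : Fin (p + 1) → ℝ) : A := fderiv ℝ g y (Pi.single s 1)

/-- Partial derivative `∂_{x_s}` of a function on `ℝ^{p+2} = ℝ^{p+1} × ℝ`. -/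
noncomputable def pdSx (p : ℕ) (s : Fin (p + 1)) (G : (Fin (p + 1) → ℝ) × ℝ → A)
    (z : (Fin (p + 1) → ℝ) × ℝ) : A := fderiv ℝ G z (Pi.single s 1, 0)

/-- Partial derivative `∂_r` of a function on `ℝ^{p+2} = ℝ^{p+1} × ℝ`. -/
noncomputable def pdSr (p : ℕ) (G : (Fin (p + 1) → ℝ) × ℝ → A)
    (z : (Fin (p + 1) → ℝ) × ℝ) : A := fderiv ℝ G z (0, 1)

/-- Second partial derivative `∂_r²`. -/
noncomputable def pdSr2 (p : ℕ) (G : (Fin (p + 1) → ℝ) × ℝ → A)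
    (z : (Fin (p + 1) → ℝ) × ℝ) : A := pdSr p (pdSr p G) z

/-- The operator `Σ_{lo ≤ s ≤ hi} v_s ∂_{x_s}` on functions on `ℝ^{m+1}`.
`Dop v m 0 p` is `D_{x_p}`, `Dop v m (p+1) m` is `D_{x_q}`, `Dop v m 0 m` is `D_x`. -/
noncomputable def Dop (v : ℕ → A) (m lo hi : ℕ) (f : (Fin (m + 1) → ℝ) → A)
    (x : Fin (m + 1) → ℝ) : A :=
  ∑ s : Fin (m + 1), if lo ≤ (s : ℕ) ∧ (s : ℕ) ≤ hi then v (s : ℕ) * pdF m s f x else 0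

/-- The conjugate operator `∂_{x_0} - Σ_{1 ≤ s ≤ hi} v_s ∂_{x_s}` on functions on
`ℝ^{m+1}`; `Dbarop v m p` is `D̄_{x_p}`, `Dbarop v m m` is `D̄_x`. -/
noncomputable def Dbarop (v : ℕ → A) (m hi : ℕ) (f : (Fin (m + 1) → ℝ) → A)
    (x : Fin (m + 1) → ℝ) : A :=
  pdF m 0 f x -
    ∑ s : Fin (m + 1), if 1 ≤ (s : ℕ) ∧ (s : ℕ) ≤ hi then v (s : ℕ) * pdF m s f x else 0

/-- The operator `D_{x_p} = Σ_{s=0}^p v_s ∂_{x_s}` on functions on `ℝ^{p+1}`. -/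
noncomputable def DopP (v : ℕ → A) (p : ℕ) (g : (Fin (p + 1) → ℝ) → A)
    (y : Fin (p + 1) → ℝ) : A :=
  ∑ s : Fin (p + 1), v (s : ℕ) * pdP p s g y

/-- The operator `D̄_{x_p} = ∂_{x_0} - Σ_{s=1}^p v_s ∂_{x_s}` on functions on `ℝ^{p+1}`. -/
noncomputable def DbaropP (v : ℕ → A) (p : ℕ) (g : (Fin (p + 1) → ℝ) → A)
    (y : Fin (p + 1) → ℝ) : A :=
  pdP p 0 g y - ∑ s : Fin (p + 1), if 1 ≤ (s : ℕ) then v (s : ℕ) * pdP p s g y else 0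

/-- The operator `D_{x_p}` on functions on `ℝ^{p+2} = ℝ^{p+1} × ℝ`. -/
noncomputable def DopSx (v : ℕ → A) (p : ℕ) (G : (Fin (p + 1) → ℝ) × ℝ → A)
    (z : (Fin (p + 1) → ℝ) × ℝ) : A :=
  ∑ s : Fin (p + 1), v (s : ℕ) * pdSx p s G z

/-- The operator `D̄_{x_p}` on functions on `ℝ^{p+2} = ℝ^{p+1} × ℝ`. -/
noncomputable def DbaropSx (v : ℕ → A) (p : ℕ) (G : (Fin (p + 1) → ℝ) × ℝ → A)
    (z : (Fin (p + 1) → ℝ) × ℝ) : A :=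
  pdSx p 0 G z - ∑ s : Fin (p + 1), if 1 ≤ (s : ℕ) then v (s : ℕ) * pdSx p s G z else 0

/-- The Laplacian `Δ_x` on functions on `ℝ^{m+1}`. -/
noncomputable def lapF (m : ℕ) (f : (Fin (m + 1) → ℝ) → A)
    (x : Fin (m + 1) → ℝ) : A :=
  ∑ s : Fin (m + 1), pdF m s (pdF m s f) x

/-- The Laplacian `Δ_{x_p}` on functions on `ℝ^{p+1}`. -/
noncomputable def lapP (p : ℕ) (g : (Fin (p + 1) → ℝ) → A)
    (y : Fin (p + 1) → ℝ) : A :=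
  ∑ s : Fin (p + 1), pdP p s (pdP p s g) y

/-- Iterated Laplacian `Δ_x^k`. -/
noncomputable def lapIterF (m k : ℕ) (f : (Fin (m + 1) → ℝ) → A) :
    (Fin (m + 1) → ℝ) → A :=
  (fun g => lapF m g)^[k] f

/-- Iterated Laplacian `Δ_{x_p}^k`. -/
noncomputable def lapIterP (p k : ℕ) (g : (Fin (p + 1) → ℝ) → A) :
    (Fin (p + 1) → ℝ) → A :=
  (fun h => lapP p h)^[k] g

/-- The Laplacian `Δ_{x'} = Δ_{x_p} + ∂_r²` on functions on `ℝ^{p+2}`. -/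
noncomputable def lapSx (p : ℕ) (G : (Fin (p + 1) → ℝ) × ℝ → A)
    (z : (Fin (p + 1) → ℝ) × ℝ) : A :=
  (∑ s : Fin (p + 1), pdSx p s (pdSx p s G) z) + pdSr2 p G z

/-- The slice Cauchy-Riemann operator `D_ω = D_{x_p} + ω ∂_r` applied to a function
on `ℝ^{p+2}`, where `ω` is given in coordinates by `w`. -/
noncomputable def DomCR (v : ℕ → A) (m p : ℕ) (w : Fin (m + 1) → ℝ)
    (G : (Fin (p + 1) → ℝ) × ℝ → A) (z : (Fin (p + 1) → ℝ) × ℝ) : A :=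
  DopSx v p G z + emb v m w * pdSr p G z

/-- `f` is left generalized partial-slice monogenic (of type `(p, m-p)`) on `Ω`. -/
def GSM (v : ℕ → A) (m p : ℕ) (f : (Fin (m + 1) → ℝ) → A)
    (Ω : Set (Fin (m + 1) → ℝ)) : Prop :=
  ∀ w ∈ Sph v m p, ContDiffOn ℝ 1 (sliceFun m p f w) (sliceSet m p Ω w) ∧
    ∀ z ∈ sliceSet m p Ω w, DomCR v m p w (sliceFun m p f w) z = 0

/-- `Ω` is partially symmetric with respect to `ℝ^{p+1}`. -/
def PSym (v : ℕ → A) (m p : ℕ) (Ω : Set (Fin (m + 1) → ℝ)) : Prop :=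
  ∀ x ∈ Ω, ∀ w ∈ Sph v m p, xppart m p x + rad m p x • w ∈ Ω

/-- `Ω` is a slice domain: a domain meeting `ℝ^{p+1}` all of whose slices are
domains in `ℝ^{p+2}`. -/
def SliceDomain (v : ℕ → A) (m p : ℕ) (Ω : Set (Fin (m + 1) → ℝ)) : Prop :=
  IsOpen Ω ∧ IsConnected Ω ∧ (∃ x ∈ Ω, xqpart m p x = 0) ∧
    ∀ w ∈ Sph v m p, IsConnected (sliceSet m p Ω w)

/-- The reflection `(x_p, r) ↦ (x_p, -r)` of `ℝ^{p+2}`. -/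
def reflD (p : ℕ) (z : (Fin (p + 1) → ℝ) × ℝ) : (Fin (p + 1) → ℝ) × ℝ := (z.1, -z.2)

/-- The p-symmetric completion `Ω_D ⊆ M` of `D ⊆ ℝ^{p+2}`. -/
def OmegaD (v : ℕ → A) (m p : ℕ) (D : Set ((Fin (p + 1) → ℝ) × ℝ)) :
    Set (Fin (m + 1) → ℝ) :=
  {x | ∃ w ∈ Sph v m p, ∃ z ∈ D, x = pt m p w z.1 z.2}

/-- `(F₁, F₂)` satisfies the even-odd (stem function) conditions on `D`. -/
def IsStem (p : ℕ) (D : Set ((Fin (p + 1) → ℝ) × ℝ))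
    (F₁ F₂ : (Fin (p + 1) → ℝ) × ℝ → A) : Prop :=
  ∀ z ∈ D, F₁ (reflD p z) = F₁ z ∧ F₂ (reflD p z) = -F₂ z

/-- `f` is the generalized partial-slice function induced by the stem `(F₁, F₂)`:
`f(x_p + rω) = F₁(x_p, r) + ω F₂(x_p, r)`. -/
def Induced (v : ℕ → A) (m p : ℕ) (D : Set ((Fin (p + 1) → ℝ) × ℝ))
    (F₁ F₂ : (Fin (p + 1) → ℝ) × ℝ → A) (f : (Fin (m + 1) → ℝ) → A) : Prop :=
  ∀ w ∈ Sph v m p, ∀ z ∈ D, f (pt m p w z.1 z.2) = F₁ z + emb v m w * F₂ z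

/-- The generalized Cauchy-Riemann system for the stem `(F₁, F₂)` on `D`. -/
def StemCR (v : ℕ → A) (p : ℕ) (D : Set ((Fin (p + 1) → ℝ) × ℝ))
    (F₁ F₂ : (Fin (p + 1) → ℝ) × ℝ → A) : Prop :=
  ∀ z ∈ D, DopSx v p F₁ z - pdSr p F₂ z = 0 ∧ DbaropSx v p F₂ z + pdSr p F₁ z = 0

/-- `f` is generalized partial-slice regular on `Ω_D`. -/
def MemGSR (v : ℕ → A) (m p : ℕ) (D : Set ((Fin (p + 1) → ℝ) × ℝ))
    (f : (Fin (m + 1) → ℝ) → A) : Prop :=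
  ∃ F₁ F₂ : (Fin (p + 1) → ℝ) × ℝ → A, IsStem p D F₁ F₂ ∧
    ContDiffOn ℝ 1 F₁ D ∧ ContDiffOn ℝ 1 F₂ D ∧
    Induced v m p D F₁ F₂ f ∧ StemCR v p D F₁ F₂

/-- `f` is a generalized partial-slice function on `Ω`. -/
def MemGS (v : ℕ → A) (m p : ℕ) (Ω : Set (Fin (m + 1) → ℝ))
    (f : (Fin (m + 1) → ℝ) → A) : Prop :=
  ∃ F₁ F₂ : (Fin (p + 1) → ℝ) × ℝ → A,
    (∀ z : (Fin (p + 1) → ℝ) × ℝ, F₁ (reflD p z) = F₁ z ∧ F₂ (reflD p z) = -F₂ z) ∧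
    ∀ x ∈ Ω, f x = F₁ (projP m p x, rad m p x) +
      emb v m (normq m p x) * F₂ (projP m p x, rad m p x)

/-- Non-associative power: `a^n` with products taken from the right. -/
def apow (a : A) (n : ℕ) : A := (fun b => a * b)^[n] 1

/-- Partial even part `PE[f](x) = (f(x) + f(x_⋄))/2`. -/
noncomputable def PE (m p : ℕ) (f : (Fin (m + 1) → ℝ) → A)
    (x : Fin (m + 1) → ℝ) : A := (2 : ℝ)⁻¹ • (f x + f (reflP m p x))

/-- Partial odd part `PO[f](x) = (f(x) - f(x_⋄))/2`. -/
noncomputable def PO (m p : ℕ) (f : (Fin (m + 1) → ℝ) → A)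
    (x : Fin (m + 1) → ℝ) : A := (2 : ℝ)⁻¹ • (f x - f (reflP m p x))

/-- `Ω₀* = {x_p + x_q : x_p ∈ Ω₀, x_q ∈ ℝ^q}`. -/
def Omega0star (m p : ℕ) (Ω₀ : Set (Fin (p + 1) → ℝ)) : Set (Fin (m + 1) → ℝ) :=
  {x | projP m p x ∈ Ω₀}

/-- The spherical derivative `f'_s(x) = (1/2) x_q⁻¹ (f(x) - f(x_⋄))`
(using `x_q⁻¹ = -x_q/|x_q|²`). -/
noncomputable def sder (v : ℕ → A) (m p : ℕ) (f : (Fin (m + 1) → ℝ) → A)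
    (x : Fin (m + 1) → ℝ) : A :=
  -(((2 : ℝ) * rad m p x ^ 2)⁻¹) • (emb v m (xqpart m p x) * (f x - f (reflP m p x)))

/-- The spherical Dirac operator
`Γ f = -(1/2) Σ_{p+1 ≤ i,j ≤ m} v_i (v_j (L_{ij} f))`. -/
noncomputable def sphericalGamma (v : ℕ → A) (m p : ℕ) (f : (Fin (m + 1) → ℝ) → A)
    (x : Fin (m + 1) → ℝ) : A :=
  -((2 : ℝ)⁻¹) • ∑ i : Fin (m + 1), ∑ j : Fin (m + 1),
    if p < (i : ℕ) ∧ p < (j : ℕ) then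
      v (i : ℕ) * (v (j : ℕ) * (x i • pdF m j f x - x j • pdF m i f x)) else 0

/-- The slice Cauchy-Riemann operator `D_ω` applied to (the slice restriction of) a
function `f` on `M`, at the point `x` (with `ω = x_q/|x_q|`). -/
noncomputable def DomCRat (v : ℕ → A) (m p : ℕ) (f : (Fin (m + 1) → ℝ) → A)
    (x : Fin (m + 1) → ℝ) : A :=
  DomCR v m p (normq m p x) (sliceFun m p f (normq m p x)) (projP m p x, rad m p x)

/-- `f` is left monogenic on `Ω`: `f ∈ C¹` and `D_x f = 0`. -/
def Monogenic (v : ℕ → A) (m : ℕ) (f : (Fin (m + 1) → ℝ) → A)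
    (Ω : Set (Fin (m + 1) → ℝ)) : Prop :=
  ContDiffOn ℝ 1 f Ω ∧ ∀ x ∈ Ω, Dop v m 0 m f x = 0

/-- `f` is harmonic on `Ω`: `f ∈ C²` and `Δ_x f = 0`. -/
def Harmonic (m : ℕ) (f : (Fin (m + 1) → ℝ) → A)
    (Ω : Set (Fin (m + 1) → ℝ)) : Prop :=
  ContDiffOn ℝ 2 f Ω ∧ ∀ x ∈ Ω, lapF m f x = 0

/-- A family of functions converges normally (locally a summable uniform bound). -/
def NormallyConvOn {E F : Type*} [TopologicalSpace E] [NormedAddCommGroup F]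
    (u : ℕ → E → F) (s : Set E) : Prop :=
  ∀ x ∈ s, ∃ U ∈ nhds x, ∃ c : ℕ → ℝ, Summable c ∧ ∀ k : ℕ, ∀ y ∈ U, ‖u k y‖ ≤ c k

/-- The generalized partial-slice CK-extension
`CK[f₀](x) = Σ_k (r^{2k}/(2k)!)(-Δ_{x_p})^k f₀(x_p)
  + ω Σ_k (r^{2k+1}/(2k+1)!)(-Δ_{x_p})^k (D_{x_p} f₀)(x_p)`. -/
noncomputable def CKe (v : ℕ → A) (m p : ℕ) (f₀ : (Fin (p + 1) → ℝ) → A)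
    (x : Fin (m + 1) → ℝ) : A :=
  (∑' k : ℕ, (((-1 : ℝ) ^ k * rad m p x ^ (2 * k)) / (2 * k).factorial) •
      lapIterP p k f₀ (projP m p x)) +
  emb v m (normq m p x) *
    ∑' k : ℕ, (((-1 : ℝ) ^ k * rad m p x ^ (2 * k + 1)) / (2 * k + 1).factorial) •
      lapIterP p k (DopP v p f₀) (projP m p x)

/-- The coefficient `Γ(q/2)(-1)^k r^{2k} / (2^{2k} k! Γ(k + q/2))`. -/
noncomputable def hgckC (q k : ℕ) (r : ℝ) : ℝ :=
  (Real.Gamma ((q : ℝ) / 2) * (-1) ^ k * r ^ (2 * k)) /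
    (2 ^ (2 * k) * (k.factorial : ℝ) * Real.Gamma ((k : ℝ) + (q : ℝ) / 2))

/-- The coefficient `Γ(q/2)(-1)^k r^{2k} / (2^{2k+1} k! Γ(k + q/2 + 1))`. -/
noncomputable def gckC' (q k : ℕ) (r : ℝ) : ℝ :=
  (Real.Gamma ((q : ℝ) / 2) * (-1) ^ k * r ^ (2 * k)) /
    (2 ^ (2 * k + 1) * (k.factorial : ℝ) * Real.Gamma ((k : ℝ) + (q : ℝ) / 2 + 1))

/-- The coefficient `Γ(q/2 + 1)(-1)^k r^{2k} / (2^{2k} k! Γ(k + q/2 + 1))`. -/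
noncomputable def hgckC' (q k : ℕ) (r : ℝ) : ℝ :=
  (Real.Gamma ((q : ℝ) / 2 + 1) * (-1) ^ k * r ^ (2 * k)) /
    (2 ^ (2 * k) * (k.factorial : ℝ) * Real.Gamma ((k : ℝ) + (q : ℝ) / 2 + 1))

/-- The monogenic generalized CK-extension `GCK[A₀]`. -/
noncomputable def GCKe (v : ℕ → A) (m p : ℕ) (A₀ : (Fin (p + 1) → ℝ) → A)
    (x : Fin (m + 1) → ℝ) : A :=
  (∑' k : ℕ, hgckC (m - p) k (rad m p x) • lapIterP p k A₀ (projP m p x)) +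
  emb v m (xqpart m p x) *
    ∑' k : ℕ, gckC' (m - p) k (rad m p x) • lapIterP p k (DopP v p A₀) (projP m p x)

/-- The harmonic generalized CK-extension `HGCK[A₀, A₁]`. -/
noncomputable def HGCKe (v : ℕ → A) (m p : ℕ) (A₀ A₁ : (Fin (p + 1) → ℝ) → A)
    (x : Fin (m + 1) → ℝ) : A :=
  (∑' k : ℕ, hgckC (m - p) k (rad m p x) • lapIterP p k A₀ (projP m p x)) +
  emb v m (xqpart m p x) *
    ∑' k : ℕ, hgckC' (m - p) k (rad m p x) • lapIterP p k A₁ (projP m p x)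

/-- The operator `(1/r)∂_r`, extended to `r = 0` by its limit `∂_r²` (on even
functions). -/
noncomputable def T1 (p : ℕ) (G : (Fin (p + 1) → ℝ) × ℝ → A) :
    (Fin (p + 1) → ℝ) × ℝ → A := fun z =>
  if z.2 = 0 then pdSr2 p G z else (z.2)⁻¹ • pdSr p G z

/-- The operator `∂_r ∘ (1/r)`, extended to `r = 0` by its limit `(1/2)∂_r²` (on odd
functions). -/
noncomputable def T2 (p : ℕ) (G : (Fin (p + 1) → ℝ) × ℝ → A) :
    (Fin (p + 1) → ℝ) × ℝ → A := fun z =>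
  if z.2 = 0 then (2 : ℝ)⁻¹ • pdSr2 p G z
  else fderiv ℝ (fun t : ℝ => t⁻¹ • G (z.1, t)) z.2 1

/-- `C_q(k) = (q-1)(q-3)⋯(q-2k+1)`, `C_q(0) = 1`. -/
noncomputable def cq (q k : ℕ) : ℝ :=
  ∏ i ∈ Finset.range k, ((q : ℝ) - (2 * (i : ℝ) + 1))

/-- Double factorial. -/
def dfac : ℕ → ℕ
  | 0 => 1
  | 1 => 1
  | n + 2 => (n + 2) * dfac n

/-- The Fueter-Sce constant `γ_q = (-1)^{(q-1)/2} (q-1)!!/(q-2)!!`. -/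
noncomputable def gammaQ (q : ℕ) : ℝ :=
  (-1 : ℝ) ^ ((q - 1) / 2) * (dfac (q - 1) : ℝ) / (dfac (q - 2) : ℝ)


/-- Cauchy estimates near a point of analyticity. -/
theorem cauchy_bound {E F : Type*} [NormedAddCommGroup E] [NormedSpace ℝ E]
    [NormedAddCommGroup F] [NormedSpace ℝ F] [CompleteSpace F]
    {f : E → F} {x₀ : E} (hf : AnalyticAt ℝ f x₀) :
    ∃ δ > 0, ∃ C > 0, ∃ K > 0, ∀ y ∈ Metric.ball x₀ δ, ∀ n : ℕ,
      ‖iteratedFDeriv ℝ n f y‖ ≤ C * K ^ n * n.factorial := by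
  obtain ⟨P, R, hP⟩ := hf
  obtain ⟨ρ, hρ0, hρ⟩ := ENNReal.lt_iff_exists_nnreal_btwn.1 hP.r_pos
  have hρpos : 0 < ρ := by exact_mod_cast hρ0
  set a : NNReal := ρ / 2 with ha
  have hapos : 0 < a := by positivity
  have haa : (a + a : NNReal) = ρ := by rw [ha]; exact add_halves ρ
  have hsumlt : ((a : ENNReal) + a) < P.radius := by
    refine lt_of_lt_of_le ?_ hP.r_le
    rw [← ENNReal.coe_add, haa]; exact hρ
  have S := P.changeOriginSeries_summable_aux₁ hsumlt
  set T : NNReal := ∑' s : Σ k l : ℕ, { s : Finset (Fin (k + l)) // s.card = l },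
      ‖P (s.1 + s.2.1)‖₊ * a ^ s.2.1 * a ^ s.1 with hT
  refine ⟨a, by exact_mod_cast hapos, T + 1, by positivity, (a : ℝ)⁻¹, by positivity, ?_⟩
  intro y hy n
  have hyn : ‖y - x₀‖ < a := by simpa [dist_eq_norm] using hy
  have hyn' : ‖y - x₀‖₊ < a := by exact_mod_cast hyn
  have haR : (a : ENNReal) ≤ R := by
    refine le_trans ?_ hρ.le
    exact_mod_cast (by rw [← haa]; exact le_add_of_nonneg_left hapos.le : a ≤ ρ)
  have hlt : (‖y - x₀‖₊ : ENNReal) < R :=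
    lt_of_lt_of_le (by exact_mod_cast hyn') haR
  have hb := hP.changeOrigin hlt
  rw [add_sub_cancel] at hb
  set Q := P.changeOrigin (y - x₀) with hQ
  have h1 : ‖iteratedFDeriv ℝ n f y‖ ≤ n.factorial * ‖Q n‖ := by
    refine ContinuousMultilinearMap.opNorm_le_bound (by positivity) ?_
    intro w
    rw [hb.iteratedFDeriv_eq_sum_of_completeSpace w]
    refine (norm_sum_le _ _).trans ?_
    have : ∀ σ : Equiv.Perm (Fin n), ‖Q n (fun i => w (σ i))‖ ≤ ‖Q n‖ * ∏ i, ‖w i‖ := by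
      intro σ
      refine ((Q n).le_opNorm _).trans ?_
      rw [Equiv.prod_comp σ (fun i => ‖w i‖)]
    refine (Finset.sum_le_sum fun σ _ => this σ).trans ?_
    rw [Finset.sum_const, Finset.card_univ, Fintype.card_perm, Fintype.card_fin, nsmul_eq_mul,
      mul_assoc]
  have h2 : ‖Q n‖₊ * a ^ n ≤ T := by
    have h3 := P.nnnorm_changeOrigin_le n (lt_of_lt_of_le hlt hP.r_le)
    have S2 := NNReal.summable_sigma.1 S
    have S3 := S2.1 n
    have hane : (a ^ n) ≠ 0 := (pow_pos hapos n).ne'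
    have S4 : Summable fun s : Σ l : ℕ, { s : Finset (Fin (n + l)) // s.card = l } =>
        ‖P (n + s.1)‖₊ * a ^ s.1 := by
      simpa only [mul_inv_cancel_right₀ hane] using S3.mul_right (a ^ n)⁻¹
    have h4 : ‖Q n‖₊ ≤ ∑' s : Σ l : ℕ, { s : Finset (Fin (n + l)) // s.card = l },
        ‖P (n + s.1)‖₊ * a ^ s.1 := by
      refine h3.trans ?_
      refine Summable.tsum_le_tsum (fun s => ?_) (NNReal.summable_of_le (fun s => ?_) S4) S4
      · gcongr
      · gcongr
    calc ‖Q n‖₊ * a ^ n ≤ (∑' s : Σ l : ℕ, { s : Finset (Fin (n + l)) // s.card = l },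
        ‖P (n + s.1)‖₊ * a ^ s.1) * a ^ n := by gcongr
      _ = ∑' s : Σ l : ℕ, { s : Finset (Fin (n + l)) // s.card = l },
        ‖P (n + s.1)‖₊ * a ^ s.1 * a ^ n := by rw [NNReal.tsum_mul_right]
      _ ≤ ∑' k, ∑' s : Σ l : ℕ, { s : Finset (Fin (k + l)) // s.card = l },
        ‖P (k + s.1)‖₊ * a ^ s.1 * a ^ k := S2.2.le_tsum n (fun _ _ => zero_le)
      _ = T := by rw [hT, S.tsum_sigma' (fun k => S2.1 k)]
  have h2' : ‖Q n‖ * (a : ℝ) ^ n ≤ T := by exact_mod_cast h2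
  have h5 : ‖Q n‖ ≤ (T + 1) * (a : ℝ)⁻¹ ^ n := by
    rw [inv_pow, ← div_eq_mul_inv, le_div_iff₀ (by positivity)]
    linarith
  calc _ ≤ _ := h1
    _ ≤ n.factorial * ((T + 1) * (a : ℝ)⁻¹ ^ n) := by gcongr
    _ = _ := by ring

section Calc
set_option linter.unusedSectionVars false
variable {A : Type*} [NormedAddCommGroup A] [NormedSpace ℝ A]
variable {p : ℕ} {Ω : Set (Fin (p + 1) → ℝ)}

theorem pdP_congr (hΩ : IsOpen Ω) {g h : (Fin (p + 1) → ℝ) → A} (e : Set.EqOn g h Ω)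
    (s : Fin (p + 1)) : Set.EqOn (pdP p s g) (pdP p s h) Ω := by
  intro y hy
  have : g =ᶠ[𝓝 y] h := Filter.eventuallyEq_of_mem (hΩ.mem_nhds hy) e
  simp only [pdP, this.fderiv_eq]

theorem lapP_congr (hΩ : IsOpen Ω) {g h : (Fin (p + 1) → ℝ) → A} (e : Set.EqOn g h Ω) :
    Set.EqOn (lapP p g) (lapP p h) Ω := by
  intro y hy
  simp only [lapP]
  exact Finset.sum_congr rfl fun s _ => pdP_congr hΩ (pdP_congr hΩ e s) s hy

theorem lapIterP_succ (k : ℕ) (g : (Fin (p + 1) → ℝ) → A) :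
    lapIterP p (k + 1) g = lapIterP p k (lapP p g) := rfl

theorem lapIterP_succ' (k : ℕ) (g : (Fin (p + 1) → ℝ) → A) :
    lapIterP p (k + 1) g = lapP p (lapIterP p k g) := by
  simp only [lapIterP, Function.iterate_succ_apply']

theorem lapIterP_congr (hΩ : IsOpen Ω) {g h : (Fin (p + 1) → ℝ) → A} (e : Set.EqOn g h Ω)
    (k : ℕ) : Set.EqOn (lapIterP p k g) (lapIterP p k h) Ω := by
  induction k with
  | zero => exact e
  | succ k ih => rw [lapIterP_succ', lapIterP_succ']; exact lapP_congr hΩ ih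

variable [CompleteSpace A]

theorem an_pdP {g : (Fin (p + 1) → ℝ) → A} (hg : AnalyticOnNhd ℝ g Ω) (s : Fin (p + 1)) :
    AnalyticOnNhd ℝ (pdP p s g) Ω := by
  have h := hg.fderiv
  exact (ContinuousLinearMap.apply ℝ A (Pi.single s (1 : ℝ) : Fin (p + 1) → ℝ)).comp_analyticOnNhd h

theorem an_lapP {g : (Fin (p + 1) → ℝ) → A} (hg : AnalyticOnNhd ℝ g Ω) :
    AnalyticOnNhd ℝ (lapP p g) Ω := by
  have : lapP p g = fun y => ∑ s, pdP p s (pdP p s g) y := rfl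
  rw [this]
  exact Finset.analyticOnNhd_fun_sum _ fun s _ => an_pdP (an_pdP hg s) s

theorem an_lapIterP {g : (Fin (p + 1) → ℝ) → A} (hg : AnalyticOnNhd ℝ g Ω) (k : ℕ) :
    AnalyticOnNhd ℝ (lapIterP p k g) Ω := by
  induction k with
  | zero => exact hg
  | succ k ih => rw [lapIterP_succ']; exact an_lapP ih

theorem pdP_comm {g : (Fin (p + 1) → ℝ) → A} (hg : AnalyticOnNhd ℝ g Ω) (s t : Fin (p + 1))
    {y : Fin (p + 1) → ℝ} (hy : y ∈ Ω) :
    pdP p s (pdP p t g) y = pdP p t (pdP p s g) y := by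
  have hd : DifferentiableAt ℝ (fderiv ℝ g) y := (hg.fderiv y hy).differentiableAt
  have key : ∀ a b : Fin (p + 1), pdP p a (pdP p b g) y =
      fderiv ℝ (fderiv ℝ g) y (Pi.single a 1) (Pi.single b 1) := by
    intro a b
    have h := (ContinuousLinearMap.apply ℝ A
      (Pi.single b (1 : ℝ) : Fin (p + 1) → ℝ)).hasFDerivAt.comp y hd.hasFDerivAt
    have h2 := h.fderiv
    change fderiv ℝ (pdP p b g) y = _ at h2
    simp only [pdP] at h2 ⊢
    rw [h2]; rfl
  rw [key, key]
  exact ((hg y hy).contDiffAt.isSymmSndFDerivAt_of_omega) _ _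

theorem pdP_sum {ι : Type*} (S : Finset ι) {G : ι → (Fin (p + 1) → ℝ) → A}
    (hG : ∀ i ∈ S, AnalyticOnNhd ℝ (G i) Ω) (s : Fin (p + 1))
    {y : Fin (p + 1) → ℝ} (hy : y ∈ Ω) :
    pdP p s (fun z => ∑ i ∈ S, G i z) y = ∑ i ∈ S, pdP p s (G i) y := by
  simp only [pdP]
  rw [fderiv_fun_sum fun i hi => (hG i hi y hy).differentiableAt]
  simp

theorem pdP_clm (T : A →L[ℝ] A) {g : (Fin (p + 1) → ℝ) → A} (hg : AnalyticOnNhd ℝ g Ω)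
    (s : Fin (p + 1)) {y : Fin (p + 1) → ℝ} (hy : y ∈ Ω) :
    pdP p s (fun z => T (g z)) y = T (pdP p s g y) := by
  have h := T.hasFDerivAt.comp y (hg y hy).differentiableAt.hasFDerivAt
  have h2 := h.fderiv
  change fderiv ℝ (fun z => T (g z)) y = _ at h2
  simp only [pdP, h2]; rfl

/-- First-order operator with constant (linear map) coefficients. -/
noncomputable def cop (p : ℕ) (T : Fin (p + 1) → A →L[ℝ] A) (g : (Fin (p + 1) → ℝ) → A) :
    (Fin (p + 1) → ℝ) → A := fun y => ∑ s, T s (pdP p s g y)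

theorem an_cop (T : Fin (p + 1) → A →L[ℝ] A) {g : (Fin (p + 1) → ℝ) → A}
    (hg : AnalyticOnNhd ℝ g Ω) : AnalyticOnNhd ℝ (cop p T g) Ω :=
  Finset.analyticOnNhd_fun_sum _ fun s _ => (T s).comp_analyticOnNhd (an_pdP hg s)

theorem cop_congr (hΩ : IsOpen Ω) (T : Fin (p + 1) → A →L[ℝ] A)
    {g h : (Fin (p + 1) → ℝ) → A} (e : Set.EqOn g h Ω) :
    Set.EqOn (cop p T g) (cop p T h) Ω := fun y hy =>
  Finset.sum_congr rfl fun s _ => by rw [pdP_congr hΩ e s hy]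

theorem pdP_cop (T : Fin (p + 1) → A →L[ℝ] A) {g : (Fin (p + 1) → ℝ) → A}
    (hg : AnalyticOnNhd ℝ g Ω) (t : Fin (p + 1)) :
    Set.EqOn (pdP p t (cop p T g)) (cop p T (pdP p t g)) Ω := by
  intro y hy
  change pdP p t (fun z => ∑ s, T s (pdP p s g z)) y = ∑ s, T s (pdP p s (pdP p t g) y)
  rw [pdP_sum (Ω := Ω) (G := fun s z => T s (pdP p s g z)) _
    (fun s _ => (T s).comp_analyticOnNhd (an_pdP hg s)) t hy]
  refine Finset.sum_congr rfl fun s _ => ?_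
  rw [pdP_clm (T s) (an_pdP hg s) t hy, pdP_comm hg t s hy]

theorem lapP_cop (hΩ : IsOpen Ω) (T : Fin (p + 1) → A →L[ℝ] A) {g : (Fin (p + 1) → ℝ) → A}
    (hg : AnalyticOnNhd ℝ g Ω) :
    Set.EqOn (lapP p (cop p T g)) (cop p T (lapP p g)) Ω := by
  intro y hy
  have h1 : ∀ t, pdP p t (pdP p t (cop p T g)) y = cop p T (pdP p t (pdP p t g)) y := by
    intro t
    rw [pdP_congr hΩ (pdP_cop T hg t) t hy, pdP_cop T (an_pdP hg t) t hy]
  have h2 : ∀ s, pdP p s (lapP p g) y = ∑ t, pdP p s (pdP p t (pdP p t g)) y := fun s =>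
    pdP_sum (Ω := Ω) (G := fun t => pdP p t (pdP p t g)) Finset.univ
      (fun t _ => an_pdP (an_pdP hg t) t) s hy
  calc lapP p (cop p T g) y = ∑ t, cop p T (pdP p t (pdP p t g)) y := by
        simp only [lapP, h1]
    _ = cop p T (lapP p g) y := by
        simp only [cop, h2, map_sum]
        exact Finset.sum_comm

theorem lapIterP_cop (hΩ : IsOpen Ω) (T : Fin (p + 1) → A →L[ℝ] A)
    {g : (Fin (p + 1) → ℝ) → A} (hg : AnalyticOnNhd ℝ g Ω) (k : ℕ) :
    Set.EqOn (lapIterP p k (cop p T g)) (cop p T (lapIterP p k g)) Ω := by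
  induction k with
  | zero => exact fun y _ => rfl
  | succ k ih =>
    rw [lapIterP_succ', lapIterP_succ']
    exact (lapP_congr hΩ ih).trans (lapP_cop hΩ T (an_lapIterP hg k))

theorem norm_single_le (s : Fin (p + 1)) : ‖(Pi.single s (1 : ℝ) : Fin (p + 1) → ℝ)‖ ≤ 1 := by
  rw [Pi.norm_single]; simp

theorem bound_pdP {g : (Fin (p + 1) → ℝ) → A} (hg : AnalyticOnNhd ℝ g Ω) (s : Fin (p + 1))
    {y : Fin (p + 1) → ℝ} (hy : y ∈ Ω) (n : ℕ) :
    ‖iteratedFDeriv ℝ n (pdP p s g) y‖ ≤ ‖iteratedFDeriv ℝ (n + 1) g y‖ := by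
  rw [← norm_iteratedFDeriv_fderiv]
  set T := ContinuousLinearMap.apply ℝ A (Pi.single s (1 : ℝ) : Fin (p + 1) → ℝ) with hT
  have h := T.norm_iteratedFDeriv_comp_left (N := n) (n := n) (x := y) (f := fderiv ℝ g)
    ((hg.fderiv y hy).contDiffAt) le_rfl
  have e : pdP p s g = T ∘ fderiv ℝ g := rfl
  rw [e]
  refine h.trans ?_
  have hT1 : ‖T‖ ≤ 1 := by
    refine ContinuousLinearMap.opNorm_le_bound _ zero_le_one fun L => ?_
    rw [one_mul]
    refine (L.le_opNorm _).trans ?_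
    exact mul_le_of_le_one_right (norm_nonneg _) (norm_single_le s)
  exact mul_le_of_le_one_left (norm_nonneg _) hT1

theorem bound_lapP {g : (Fin (p + 1) → ℝ) → A} (hg : AnalyticOnNhd ℝ g Ω)
    {y : Fin (p + 1) → ℝ} (hy : y ∈ Ω) (n : ℕ) :
    ‖iteratedFDeriv ℝ n (lapP p g) y‖ ≤ ((p : ℝ) + 1) * ‖iteratedFDeriv ℝ (n + 2) g y‖ := by
  have e : lapP p g = fun z => ∑ s, pdP p s (pdP p s g) z := rfl
  rw [e, iteratedFDeriv_fun_sum_apply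
    (fun s _ => ((an_pdP (an_pdP hg s) s) y hy).contDiffAt)]
  refine (norm_sum_le _ _).trans ?_
  refine (Finset.sum_le_sum fun s _ => (bound_pdP (an_pdP hg s) s hy n).trans
    (bound_pdP hg s hy (n + 1))).trans ?_
  simp

theorem bound_lapIterP {g : (Fin (p + 1) → ℝ) → A} (hg : AnalyticOnNhd ℝ g Ω)
    {y : Fin (p + 1) → ℝ} (hy : y ∈ Ω) (k n : ℕ) :
    ‖iteratedFDeriv ℝ n (lapIterP p k g) y‖ ≤
      ((p : ℝ) + 1) ^ k * ‖iteratedFDeriv ℝ (n + 2 * k) g y‖ := by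
  induction k generalizing n with
  | zero => simp [lapIterP]
  | succ k ih =>
    rw [lapIterP_succ']
    refine (bound_lapP (an_lapIterP hg k) hy n).trans ?_
    have := ih (n + 2)
    rw [show n + 2 * (k + 1) = n + 2 + 2 * k by ring, pow_succ', mul_assoc]
    gcongr
end Calc

section Coef

theorem hgckC_factor (q k : ℕ) (r : ℝ) : hgckC q k r = hgckC q k 1 * (r ^ 2) ^ k := by
  simp only [hgckC, ← pow_mul, one_pow, mul_one]; ring

theorem hgckC'_factor (q k : ℕ) (r : ℝ) : hgckC' q k r = hgckC' q k 1 * (r ^ 2) ^ k := by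
  simp only [hgckC', ← pow_mul, one_pow, mul_one]; ring

theorem hgckC_succ {q : ℕ} (hq : 0 < q) (k : ℕ) :
    hgckC q (k + 1) 1 = -(hgckC q k 1) / (4 * (k + 1) * (k + q / 2)) := by
  have hq' : (0 : ℝ) < q := by exact_mod_cast hq
  have h0 : (0 : ℝ) < k + q / 2 := by positivity
  have hG : Real.Gamma (((k + 1 : ℕ) : ℝ) + q / 2) = (k + q / 2) * Real.Gamma (k + q / 2) := by
    rw [← Real.Gamma_add_one h0.ne']; congr 1; push_cast; ring
  have hGp := (Real.Gamma_pos_of_pos h0).ne'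
  have hf : (k.factorial : ℝ) ≠ 0 := by positivity
  have hk : ((k : ℝ) + 1) ≠ 0 := by positivity
  simp only [hgckC, hG, Nat.factorial_succ, one_pow, mul_one]
  push_cast
  rw [show 2 * (k + 1) = 2 * k + 2 by ring, pow_add, pow_succ]
  have := h0.ne'
  have h4 : (2 : ℝ) * k + q ≠ 0 := by positivity
  field_simp
  ring

theorem hgckC'_succ (q : ℕ) (k : ℕ) :
    hgckC' q (k + 1) 1 = -(hgckC' q k 1) / (4 * (k + 1) * (k + q / 2 + 1)) := by
  have h0 : (0 : ℝ) < k + q / 2 + 1 := by positivity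
  have hG : Real.Gamma (((k + 1 : ℕ) : ℝ) + q / 2 + 1) =
      (k + q / 2 + 1) * Real.Gamma (k + q / 2 + 1) := by
    rw [← Real.Gamma_add_one h0.ne']; congr 1; push_cast; ring
  have hGp := (Real.Gamma_pos_of_pos h0).ne'
  have hf : (k.factorial : ℝ) ≠ 0 := by positivity
  have hk : ((k : ℝ) + 1) ≠ 0 := by positivity
  simp only [hgckC', hG, Nat.factorial_succ, one_pow, mul_one]
  push_cast
  rw [show 2 * (k + 1) = 2 * k + 2 by ring, pow_add, pow_succ]
  have := h0.ne'
  field_simp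
  ring

theorem coef_bound_aux (c : ℕ → ℝ) (b : ℕ → ℝ) (h0 : |c 0| ≤ 1)
    (hb : ∀ k : ℕ, (k : ℝ) + 1 / 2 ≤ b k)
    (hs : ∀ k : ℕ, c (k + 1) = -(c k) / (4 * (k + 1) * b k)) (k : ℕ) :
    |c k| * (2 * k).factorial ≤ 1 := by
  induction k with
  | zero => simpa using h0
  | succ k ih =>
    have hbk := hb k
    have hbp : 0 < b k := lt_of_lt_of_le (by positivity) hbk
    have hk : (0 : ℝ) < k + 1 := by positivity
    have e : (((2 * (k + 1)).factorial : ℕ) : ℝ) =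
        (2 * k + 2) * (2 * k + 1) * ((2 * k).factorial : ℝ) := by
      rw [show 2 * (k + 1) = 2 * k + 1 + 1 by ring, Nat.factorial_succ, Nat.factorial_succ]
      push_cast; ring
    have e2 : |c (k + 1)| * ((2 * (k + 1)).factorial : ℝ) =
        (|c k| * (2 * k).factorial) * ((k + 1 / 2) / b k) := by
      rw [hs, e, abs_div, abs_neg, abs_of_pos (show (0 : ℝ) < 4 * (k + 1) * b k by positivity)]
      field_simp
      ring
    rw [e2]
    exact mul_le_one₀ ih (by positivity) ((div_le_one hbp).2 hbk)

theorem hgckC_bound {q : ℕ} (hq : 0 < q) (k : ℕ) :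
    |hgckC q k 1| * (2 * k).factorial ≤ 1 := by
  have hq' : (1 : ℝ) ≤ q := by exact_mod_cast hq
  refine coef_bound_aux (fun k => hgckC q k 1) (fun k => k + q / 2) ?_ ?_ (hgckC_succ hq) k
  · have : Real.Gamma ((q : ℝ) / 2) ≠ 0 := (Real.Gamma_pos_of_pos (by positivity)).ne'
    simp [hgckC, div_self this]
  · intro k; linarith

theorem hgckC'_bound (q k : ℕ) : |hgckC' q k 1| * (2 * k).factorial ≤ 1 := by
  refine coef_bound_aux (fun k => hgckC' q k 1) (fun k => k + q / 2 + 1) ?_ ?_ (hgckC'_succ q) k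
  · have : Real.Gamma ((q : ℝ) / 2 + 1) ≠ 0 := (Real.Gamma_pos_of_pos (by positivity)).ne'
    simp [hgckC', div_self this]
  · intro k
    have : (0 : ℝ) ≤ q := by positivity
    linarith

theorem hgckC'_eq {q : ℕ} (hq : 0 < q) (k : ℕ) (r : ℝ) : hgckC' q k r = q * gckC' q k r := by
  have hq' : (0 : ℝ) < q := by exact_mod_cast hq
  have h0 : (0 : ℝ) < k + q / 2 + 1 := by positivity
  have hGp := (Real.Gamma_pos_of_pos h0).ne'
  have hf : (k.factorial : ℝ) ≠ 0 := by positivity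
  simp only [hgckC', gckC', Real.Gamma_add_one (show (q : ℝ) / 2 ≠ 0 by positivity), pow_succ]
  field_simp

theorem hgckC_shift {q : ℕ} (hq : 0 < q) (k : ℕ) (r : ℝ) :
    2 * (k + 1) * hgckC q (k + 1) 1 * (r ^ 2) ^ k = -gckC' q k r := by
  have hq' : (0 : ℝ) < q := by exact_mod_cast hq
  have h0 : (0 : ℝ) < k + q / 2 := by positivity
  have hGp := (Real.Gamma_pos_of_pos h0).ne'
  have hf : (k.factorial : ℝ) ≠ 0 := by positivity
  have hk : ((k : ℝ) + 1) ≠ 0 := by positivity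
  have h4 : (2 : ℝ) * k + q ≠ 0 := by positivity
  rw [hgckC_succ hq]
  simp only [hgckC, gckC', Real.Gamma_add_one h0.ne', pow_succ, one_pow]
  field_simp
  ring

theorem hgckC'_hgckC {q : ℕ} (hq : 0 < q) (k : ℕ) :
    (q + 2 * k) * hgckC' q k 1 = q * hgckC q k 1 := by
  have hq' : (0 : ℝ) < q := by exact_mod_cast hq
  have h0 : (0 : ℝ) < k + q / 2 := by positivity
  have hGp := (Real.Gamma_pos_of_pos h0).ne'
  have hf : (k.factorial : ℝ) ≠ 0 := by positivity
  have h4 : (2 : ℝ) * k + q ≠ 0 := by positivity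
  simp only [hgckC, hgckC', Real.Gamma_add_one h0.ne',
    Real.Gamma_add_one (show (q : ℝ) / 2 ≠ 0 by positivity)]
  field_simp
  ring
end Coef

section Series
set_option linter.unusedSectionVars false
variable {A : Type*} [NormedAddCommGroup A] [NormedSpace ℝ A] [CompleteSpace A]
variable {m p : ℕ}

/-- `projP` as a continuous linear map. -/
noncomputable def projL (m p : ℕ) : (Fin (m + 1) → ℝ) →L[ℝ] (Fin (p + 1) → ℝ) :=
  ContinuousLinearMap.pi fun s =>
    if h : (s : ℕ) < m + 1 then ContinuousLinearMap.proj (⟨(s : ℕ), h⟩ : Fin (m + 1)) else 0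

theorem projL_apply (x : Fin (m + 1) → ℝ) : projL m p x = projP m p x := by
  ext s
  simp only [projL, projP, ContinuousLinearMap.pi_apply]
  split <;> simp

theorem projL_norm : ‖projL m p‖ ≤ 1 := by
  refine ContinuousLinearMap.opNorm_le_bound _ zero_le_one fun x => ?_
  rw [one_mul, projL_apply, pi_norm_le_iff_of_nonneg (norm_nonneg _)]
  intro s
  simp only [projP]
  split
  · exact norm_le_pi_norm x _
  · simp

/-- squared radius -/
noncomputable def rsq (m p : ℕ) (x : Fin (m + 1) → ℝ) : ℝ :=
  ∑ s : Fin (m + 1), (xqpart m p x s) ^ 2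

theorem rsq_nonneg (x : Fin (m + 1) → ℝ) : 0 ≤ rsq m p x :=
  Finset.sum_nonneg fun _ _ => sq_nonneg _

theorem rad_sq (x : Fin (m + 1) → ℝ) : rad m p x ^ 2 = rsq m p x :=
  Real.sq_sqrt (rsq_nonneg x)

theorem rad_nonneg (x : Fin (m + 1) → ℝ) : 0 ≤ rad m p x := Real.sqrt_nonneg _

theorem abs_xq_le (x : Fin (m + 1) → ℝ) (s : Fin (m + 1)) :
    |xqpart m p x s| ≤ rad m p x := by
  refine Real.abs_le_sqrt ?_
  exact Finset.single_le_sum (f := fun s => (xqpart m p x s) ^ 2)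
    (fun _ _ => sq_nonneg _) (Finset.mem_univ s)

/-- derivative of `rsq` -/
noncomputable def drsq (m p : ℕ) (x : Fin (m + 1) → ℝ) : (Fin (m + 1) → ℝ) →L[ℝ] ℝ :=
  ∑ s : Fin (m + 1), (2 * xqpart m p x s) • ContinuousLinearMap.proj s

theorem drsq_apply (x h : Fin (m + 1) → ℝ) :
    drsq m p x h = ∑ s, 2 * xqpart m p x s * h s := by
  simp [drsq]

theorem hasFDerivAt_rsq (x : Fin (m + 1) → ℝ) : HasFDerivAt (rsq m p) (drsq m p x) x := by
  refine HasFDerivAt.fun_sum fun s _ => ?_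
  simp only [xqpart]
  by_cases hs : (s : ℕ) ≤ p
  · simp only [hs, if_true, mul_zero, zero_smul]
    exact hasFDerivAt_const _ _
  · simp only [hs, if_false]
    have h := ((ContinuousLinearMap.proj (R := ℝ) (φ := fun _ : Fin (m + 1) => ℝ) s).hasFDerivAt
      (x := x)).pow 2
    simpa using h

theorem continuous_rad : Continuous (rad m p) := by
  have h : Continuous (rsq m p) :=
    continuous_iff_continuousAt.2 fun x => (hasFDerivAt_rsq x).continuousAt
  exact Real.continuous_sqrt.comp h

theorem drsq_norm (x : Fin (m + 1) → ℝ) : ‖drsq m p x‖ ≤ 2 * (m + 1) * rad m p x := by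
  refine ContinuousLinearMap.opNorm_le_bound _
    (mul_nonneg (by positivity) (rad_nonneg x)) fun h => ?_
  rw [drsq_apply]
  refine (norm_sum_le _ _).trans ?_
  have : ∀ s ∈ (Finset.univ : Finset (Fin (m + 1))), ‖2 * xqpart m p x s * h s‖ ≤
      2 * rad m p x * ‖h‖ := by
    intro s _
    rw [norm_mul, norm_mul, Real.norm_eq_abs, Real.norm_eq_abs, abs_two]
    have h1 := abs_xq_le (p := p) x s
    have h2 := norm_le_pi_norm h s
    have h0 := rad_nonneg (p := p) x
    gcongr
  refine (Finset.sum_le_sum this).trans ?_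
  rw [Finset.sum_const, Finset.card_univ, Fintype.card_fin, nsmul_eq_mul]
  push_cast
  apply le_of_eq; ring

/-- Local data guaranteeing convergence. -/
structure LocData (p : ℕ) (L : ℕ → (Fin (p + 1) → ℝ) → A) (y₀ : Fin (p + 1) → ℝ)
    (δ C Q : ℝ) : Prop where
  dpos : 0 < δ
  Cpos : 0 < C
  Qpos : 0 < Q
  small : Q * δ ^ 2 ≤ 1 / 2
  diff : ∀ k, ∀ y ∈ Metric.ball y₀ δ, DifferentiableAt ℝ (L k) y
  bd0 : ∀ k, ∀ y ∈ Metric.ball y₀ δ, ‖L k y‖ ≤ C * Q ^ k * (2 * k).factorial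
  bd1 : ∀ k, ∀ y ∈ Metric.ball y₀ δ, ‖fderiv ℝ (L k) y‖ ≤ C * Q ^ k * (2 * k + 1).factorial

variable {L : ℕ → (Fin (p + 1) → ℝ) → A} {y₀ : Fin (p + 1) → ℝ} {δ C Q : ℝ} {c : ℕ → ℝ}

theorem LocData.geom (H : LocData p L y₀ δ C Q) {x : Fin (m + 1) → ℝ}
    (hr : rad m p x < δ) (k : ℕ) : rsq m p x ^ k * Q ^ k ≤ (1 / 2) ^ k := by
  rw [← mul_pow]
  have h1 := H.Qpos
  have h0 := rad_nonneg (p := p) x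
  have h2 := rsq_nonneg (p := p) x
  refine pow_le_pow_left₀ (by positivity) ?_ k
  refine le_trans ?_ H.small
  rw [← rad_sq, mul_comm]
  gcongr

theorem LocData.geom' (H : LocData p L y₀ δ C Q) {x : Fin (m + 1) → ℝ}
    (hr : rad m p x < δ) (k : ℕ) :
    k * rsq m p x ^ (k - 1) * rad m p x * Q ^ k ≤ k * (1 / 2) ^ k / δ := by
  rcases k with _ | k
  · simp
  have h1 := H.Qpos
  have hd := H.dpos
  have h0 := rad_nonneg (p := p) x
  have h2 := rsq_nonneg (p := p) x
  rw [le_div_iff₀ hd, ← rad_sq]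
  simp only [Nat.add_sub_cancel]
  have h3 : (δ ^ 2) ^ k * δ * Q ^ (k + 1) * δ ≤ (1 / 2) ^ (k + 1) := by
    have : (δ ^ 2) ^ k * δ * Q ^ (k + 1) * δ = (Q * δ ^ 2) ^ (k + 1) := by ring
    rw [this]
    exact pow_le_pow_left₀ (by positivity) H.small _
  calc ((k + 1 : ℕ) : ℝ) * (rad m p x ^ 2) ^ k * rad m p x * Q ^ (k + 1) * δ
      ≤ ((k + 1 : ℕ) : ℝ) * (δ ^ 2) ^ k * δ * Q ^ (k + 1) * δ := by gcongr
    _ = ((k + 1 : ℕ) : ℝ) * ((δ ^ 2) ^ k * δ * Q ^ (k + 1) * δ) := by ring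
    _ ≤ _ := by gcongr

theorem LocData.summable_val (H : LocData p L y₀ δ C Q)
    (hc : ∀ k, |c k| * (2 * k).factorial ≤ 1) {x : Fin (m + 1) → ℝ}
    (hx : projP m p x ∈ Metric.ball y₀ δ) (hr : rad m p x < δ) :
    Summable fun k => (c k * rsq m p x ^ k) • L k (projP m p x) := by
  refine Summable.of_norm_bounded (g := fun k => C * (1 / 2 : ℝ) ^ k)
    ((summable_geometric_of_lt_one (by norm_num) (by norm_num)).mul_left C) fun k => ?_
  have h2 := rsq_nonneg (p := p) x
  have hC := H.Cpos
  have hQ := H.Qpos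
  have hb := H.bd0 k _ hx
  rw [norm_smul, norm_mul, Real.norm_eq_abs, Real.norm_eq_abs, abs_pow, abs_of_nonneg h2]
  calc |c k| * rsq m p x ^ k * ‖L k (projP m p x)‖
      ≤ |c k| * rsq m p x ^ k * (C * Q ^ k * (2 * k).factorial) := by gcongr
    _ = C * (rsq m p x ^ k * Q ^ k) * (|c k| * (2 * k).factorial) := by ring
    _ ≤ C * (1 / 2) ^ k * 1 := by
        have := H.geom hr k
        have := hc k
        gcongr
    _ = _ := by ring

/-- derivative of the `k`-th term -/
noncomputable def dterm (m p : ℕ) (c : ℕ → ℝ) (L : ℕ → (Fin (p + 1) → ℝ) → A) (k : ℕ)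
    (x : Fin (m + 1) → ℝ) : (Fin (m + 1) → ℝ) →L[ℝ] A :=
  (c k * rsq m p x ^ k) • (fderiv ℝ (L k) (projP m p x)).comp (projL m p) +
    ((c k * (k * rsq m p x ^ (k - 1))) • drsq m p x).smulRight (L k (projP m p x))

theorem LocData.hasFDerivAt_term (H : LocData p L y₀ δ C Q) {x : Fin (m + 1) → ℝ}
    (hx : projP m p x ∈ Metric.ball y₀ δ) (k : ℕ) :
    HasFDerivAt (fun x => (c k * rsq m p x ^ k) • L k (projP m p x)) (dterm m p c L k x) x := by
  have h1 : HasFDerivAt (fun x => L k (projP m p x))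
      ((fderiv ℝ (L k) (projP m p x)).comp (projL m p)) x := by
    have := (H.diff k _ hx).hasFDerivAt
    rw [← projL_apply] at this
    have h := this.comp x (projL m p).hasFDerivAt
    simpa only [Function.comp_def, projL_apply] using h
  have h2 := ((hasFDerivAt_rsq (p := p) x).pow k).const_mul (c k)
  have h3 := h2.smul h1
  refine h3.congr_fderiv ?_
  simp only [dterm]
  congr 2
  ext h
  simp [mul_assoc]

theorem LocData.dterm_bound (H : LocData p L y₀ δ C Q)
    (hc : ∀ k, |c k| * (2 * k).factorial ≤ 1) {x : Fin (m + 1) → ℝ}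
    (hx : projP m p x ∈ Metric.ball y₀ δ) (hr : rad m p x < δ) (k : ℕ) :
    ‖dterm m p c L k x‖ ≤ C * (2 * k + 1) * (1 / 2) ^ k +
      2 * (m + 1) * C / δ * (k * (1 / 2) ^ k) := by
  have h2 := rsq_nonneg (p := p) x
  have h0 := rad_nonneg (p := p) x
  have hC := H.Cpos
  have hQ := H.Qpos
  have hb := H.bd0 k _ hx
  have hb1 := H.bd1 k _ hx
  refine (norm_add_le _ _).trans (add_le_add ?_ ?_)
  · rw [norm_smul, norm_mul, Real.norm_eq_abs, Real.norm_eq_abs, abs_pow, abs_of_nonneg h2]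
    have h5 : ‖(fderiv ℝ (L k) (projP m p x)).comp (projL m p)‖ ≤
        C * Q ^ k * (2 * k + 1).factorial := by
      refine (ContinuousLinearMap.opNorm_comp_le _ _).trans ?_
      exact (mul_le_of_le_one_right (norm_nonneg _) projL_norm).trans hb1
    calc _ ≤ |c k| * rsq m p x ^ k * (C * Q ^ k * (2 * k + 1).factorial) := by gcongr
      _ = C * (2 * k + 1) * (rsq m p x ^ k * Q ^ k) * (|c k| * (2 * k).factorial) := by
          rw [Nat.factorial_succ]; push_cast; ring
      _ ≤ C * (2 * k + 1) * (1 / 2) ^ k * 1 := by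
          have := H.geom hr k
          have := hc k
          gcongr
      _ = _ := by ring
  · rw [ContinuousLinearMap.norm_smulRight_apply, norm_smul, norm_mul, norm_mul,
      Real.norm_eq_abs, Real.norm_eq_abs, Real.norm_eq_abs, abs_pow, abs_of_nonneg h2,
      Nat.abs_cast]
    have hdr := drsq_norm (p := p) x
    calc _ ≤ |c k| * (k * rsq m p x ^ (k - 1)) * (2 * (m + 1) * rad m p x) *
          (C * Q ^ k * (2 * k).factorial) := by gcongr
      _ = 2 * (m + 1) * C * (k * rsq m p x ^ (k - 1) * rad m p x * Q ^ k) *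
          (|c k| * (2 * k).factorial) := by ring
      _ ≤ 2 * (m + 1) * C * (k * (1 / 2) ^ k / δ) * 1 := by
          have := H.geom' hr k
          have := hc k
          have := H.dpos
          gcongr
      _ = _ := by ring

theorem summable_dbound (C E : ℝ) : Summable fun k : ℕ =>
    C * (2 * k + 1) * (1 / 2 : ℝ) ^ k + E * (k * (1 / 2 : ℝ) ^ k) := by
  have h1 : Summable fun k : ℕ => (k : ℝ) * (1 / 2 : ℝ) ^ k := by
    simpa using summable_pow_mul_geometric_of_norm_lt_one 1 (r := (1 / 2 : ℝ)) (by norm_num)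
  have h0 : Summable fun k : ℕ => (1 / 2 : ℝ) ^ k :=
    summable_geometric_of_lt_one (by norm_num) (by norm_num)
  refine (((h1.mul_left (2 * C)).add (h0.mul_left C)).add (h1.mul_left E)).congr fun k => ?_
  ring

theorem LocData.hasFDerivAt (H : LocData p L y₀ δ C Q)
    (hc : ∀ k, |c k| * (2 * k).factorial ≤ 1) {x : Fin (m + 1) → ℝ}
    (hx : projP m p x ∈ Metric.ball y₀ δ) (hr : rad m p x < δ) :
    HasFDerivAt (fun x => ∑' k, (c k * rsq m p x ^ k) • L k (projP m p x))
      (∑' k, dterm m p c L k x) x := by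
  have hU : IsOpen {x : Fin (m + 1) → ℝ | projP m p x ∈ Metric.ball y₀ δ ∧ rad m p x < δ} := by
    refine IsOpen.inter ?_ (isOpen_lt continuous_rad continuous_const)
    have : Continuous (projP m p) := by
      have := (projL m p).continuous
      simpa only [funext projL_apply] using this
    exact Metric.isOpen_ball.preimage this
  obtain ⟨ε, hε, hsub⟩ := Metric.isOpen_iff.1 hU x ⟨hx, hr⟩
  exact hasFDerivAt_tsum_of_isPreconnected (s := Metric.ball x ε)
    (summable_dbound C (2 * (m + 1) * C / δ)) Metric.isOpen_ball
    (convex_ball x ε).isPreconnected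
    (fun k z hz => H.hasFDerivAt_term (hsub hz).1 k)
    (fun k z hz => H.dterm_bound hc (hsub hz).1 (hsub hz).2 k)
    (Metric.mem_ball_self hε) (H.summable_val hc hx hr) (Metric.mem_ball_self hε)

theorem LocData.hasSum (H : LocData p L y₀ δ C Q)
    (hc : ∀ k, |c k| * (2 * k).factorial ≤ 1) {x : Fin (m + 1) → ℝ}
    (hx : projP m p x ∈ Metric.ball y₀ δ) (hr : rad m p x < δ) (h : Fin (m + 1) → ℝ) :
    HasSum (fun k => (c k * rsq m p x ^ k) • fderiv ℝ (L k) (projP m p x) (projP m p h) +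
      (c k * (k * rsq m p x ^ (k - 1)) * drsq m p x h) • L k (projP m p x))
      (fderiv ℝ (fun x => ∑' k, (c k * rsq m p x ^ k) • L k (projP m p x)) x h) := by
  rw [(H.hasFDerivAt hc hx hr).fderiv]
  have hs : Summable fun k => dterm m p c L k x :=
    Summable.of_norm_bounded (summable_dbound C (2 * (m + 1) * C / δ))
      fun k => H.dterm_bound hc hx hr k
  have := hs.hasSum.mapL (ContinuousLinearMap.apply ℝ A h)
  refine this.congr_fun ?_
  intro k
  simp [dterm, projL_apply]

theorem LocData.summable_S (H : LocData p L y₀ δ C Q)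
    (hc : ∀ k, |c k| * (2 * k).factorial ≤ 1) {x : Fin (m + 1) → ℝ}
    (hx : projP m p x ∈ Metric.ball y₀ δ) (hr : rad m p x < δ) :
    Summable fun k => (c k * (k * rsq m p x ^ (k - 1))) • L k (projP m p x) := by
  have h1 : Summable fun k : ℕ => (k : ℝ) * (1 / 2 : ℝ) ^ k := by
    simpa using summable_pow_mul_geometric_of_norm_lt_one 1 (r := (1 / 2 : ℝ)) (by norm_num)
  refine Summable.of_norm_bounded (h1.mul_left (2 * Q * C)) fun k => ?_
  have h2 := rsq_nonneg (p := p) x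
  have hC := H.Cpos
  have hQ := H.Qpos
  have hb := H.bd0 k _ hx
  rw [norm_smul, norm_mul, norm_mul, Real.norm_eq_abs, Real.norm_eq_abs, Real.norm_eq_abs,
    abs_pow, abs_of_nonneg h2, Nat.abs_cast]
  rcases k with _ | k
  · simp
  simp only [Nat.add_sub_cancel]
  calc _ ≤ |c (k + 1)| * (((k + 1 : ℕ) : ℝ) * rsq m p x ^ k) *
        (C * Q ^ (k + 1) * (2 * (k + 1)).factorial) := by gcongr
    _ = Q * C * ((k + 1 : ℕ) : ℝ) * (rsq m p x ^ k * Q ^ k) *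
        (|c (k + 1)| * (2 * (k + 1)).factorial) := by ring
    _ ≤ Q * C * ((k + 1 : ℕ) : ℝ) * (1 / 2) ^ k * 1 := by
        have := H.geom hr k
        have := hc (k + 1)
        gcongr
    _ = _ := by ring
end Series

section Exist
variable {A : Type*} [NormedAddCommGroup A] [NormedSpace ℝ A] [CompleteSpace A]

theorem locData_exists {p : ℕ} {Ω : Set (Fin (p + 1) → ℝ)} (hΩ : IsOpen Ω)
    {f : (Fin (p + 1) → ℝ) → A} (hf : AnalyticOnNhd ℝ f Ω) {y₀ : Fin (p + 1) → ℝ}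
    (hy₀ : y₀ ∈ Ω) :
    ∃ δ C Q : ℝ, LocData p (fun k => lapIterP p k f) y₀ δ C Q ∧ Metric.ball y₀ δ ⊆ Ω := by
  obtain ⟨δ₀, hδ₀, C₀, hC₀, K, hK, hb⟩ := cauchy_bound (hf y₀ hy₀)
  obtain ⟨ε, hε, hsub⟩ := Metric.isOpen_iff.1 hΩ y₀ hy₀
  set Q : ℝ := (p + 1) * K ^ 2 with hQ
  have hQp : 0 < Q := by positivity
  set δ : ℝ := min (min δ₀ ε) (min 1 (1 / (2 * Q))) with hδ
  have hδp : 0 < δ := by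
    rw [hδ]; exact lt_min (lt_min hδ₀ hε) (lt_min one_pos (by positivity))
  have h1 : δ ≤ δ₀ := (min_le_left _ _).trans (min_le_left _ _)
  have h2 : δ ≤ ε := (min_le_left _ _).trans (min_le_right _ _)
  have h3 : δ ≤ 1 := (min_le_right _ _).trans (min_le_left _ _)
  have h4 : δ ≤ 1 / (2 * Q) := (min_le_right _ _).trans (min_le_right _ _)
  have hbΩ : Metric.ball y₀ δ ⊆ Ω := (Metric.ball_subset_ball h2).trans hsub
  refine ⟨δ, C₀ * (1 + K), Q, ⟨hδp, by positivity, hQp, ?_, ?_, ?_, ?_⟩, hbΩ⟩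
  · have h5 : Q * δ ≤ 1 / 2 := by
      rw [le_div_iff₀ (by positivity)] at h4
      linarith
    have : Q * δ ^ 2 = (Q * δ) * δ := by ring
    rw [this]
    have h6 : 0 ≤ Q * δ := by positivity
    nlinarith
  · exact fun k y hy => ((an_lapIterP hf k) y (hbΩ hy)).differentiableAt
  · intro k y hy
    have h := bound_lapIterP hf (hbΩ hy) k 0
    rw [norm_iteratedFDeriv_zero, zero_add] at h
    refine h.trans ?_
    have h' := hb y (Metric.ball_subset_ball h1 hy) (2 * k)
    calc ((p : ℝ) + 1) ^ k * ‖iteratedFDeriv ℝ (2 * k) f y‖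
        ≤ ((p : ℝ) + 1) ^ k * (C₀ * K ^ (2 * k) * (2 * k).factorial) := by gcongr
      _ = C₀ * 1 * Q ^ k * (2 * k).factorial := by rw [hQ, mul_pow, ← pow_mul]; ring
      _ ≤ _ := by gcongr; linarith
  · intro k y hy
    have h := bound_lapIterP hf (hbΩ hy) k 1
    rw [norm_iteratedFDeriv_one, add_comm 1] at h
    refine h.trans ?_
    have h' := hb y (Metric.ball_subset_ball h1 hy) (2 * k + 1)
    calc ((p : ℝ) + 1) ^ k * ‖iteratedFDeriv ℝ (2 * k + 1) f y‖
        ≤ ((p : ℝ) + 1) ^ k * (C₀ * K ^ (2 * k + 1) * (2 * k + 1).factorial) := by gcongr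
      _ = C₀ * K * Q ^ k * (2 * k + 1).factorial := by rw [hQ, mul_pow, ← pow_mul]; ring
      _ ≤ _ := by gcongr; linarith
end Exist

section Alg
set_option linter.unusedSectionVars false
variable {A : Type*} [NormedAddCommGroup A] [NormedSpace ℝ A] [Mul A] [One A] {conj : A → A}

/-- Left multiplication as a continuous linear map. -/
noncomputable def mulL (H : IsAltStarAlg A conj) (a : A) : A →L[ℝ] A :=
  haveI := H.finDim
  LinearMap.toContinuousLinearMap
    { toFun := fun b => a * b
      map_add' := fun b c => H.mul_add' a b c
      map_smul' := fun r b => H.mul_smul' r a b }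

theorem mulL_apply (H : IsAltStarAlg A conj) (a b : A) : mulL H a b = a * b := by
  simp [mulL]

theorem mul_neg'' (H : IsAltStarAlg A conj) (a b : A) : a * (-b) = -(a * b) := by
  simp only [← mulL_apply H, map_neg]

theorem mul_zero'' (H : IsAltStarAlg A conj) (a : A) : a * 0 = 0 := by
  simp only [← mulL_apply H, map_zero]

theorem mul_sum'' (H : IsAltStarAlg A conj) {ι : Type*} (S : Finset ι) (a : A) (b : ι → A) :
    a * ∑ i ∈ S, b i = ∑ i ∈ S, a * b i := by
  simp only [← mulL_apply H, map_sum]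

theorem zero_mul'' (H : IsAltStarAlg A conj) (a : A) : 0 * a = 0 := by
  have := H.smul_mul' 0 0 a
  simpa using this

theorem neg_mul'' (H : IsAltStarAlg A conj) (a b : A) : (-a) * b = -(a * b) := by
  have := H.smul_mul' (-1) a b
  simpa using this

theorem sum_mul'' (H : IsAltStarAlg A conj) {ι : Type*} (S : Finset ι) (a : A) (b : ι → A) :
    (∑ i ∈ S, b i) * a = ∑ i ∈ S, b i * a := by
  classical
  induction S using Finset.induction_on with
  | empty => simp [zero_mul'' H]
  | insert i S hi ih => rw [Finset.sum_insert hi, Finset.sum_insert hi, H.add_mul', ih]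

variable {v : ℕ → A} {m : ℕ}

theorem v_sq (H : IsAltStarAlg A conj) (hv : IsHypBasis A conj v m) {s : ℕ} (h1 : 1 ≤ s)
    (h2 : s ≤ m) : v s * v s = -1 := by
  have h3 : conj (v s) = -v s := by
    have := hv.trace_zero s h1 h2
    exact (neg_eq_of_add_eq_zero_right this).symm
  have h4 := hv.norm_one s h1 h2
  rw [h3, mul_neg'' H] at h4
  rw [← h4, neg_neg]

theorem v_sq_mul (H : IsAltStarAlg A conj) (hv : IsHypBasis A conj v m) {s : ℕ} (h1 : 1 ≤ s)
    (h2 : s ≤ m) (a : A) : v s * (v s * a) = -a := by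
  rw [H.alt_left, v_sq H hv h1 h2, neg_mul'' H, H.one_mul']

theorem v_anti (H : IsAltStarAlg A conj) (hv : IsHypBasis A conj v m) {s t : ℕ} (h1 : 1 ≤ s)
    (h2 : s ≤ m) (h3 : 1 ≤ t) (h4 : t ≤ m) (hst : s ≠ t) (a : A) :
    v s * (v t * a) = -(v t * (v s * a)) := by
  have h := H.alt_left (v s + v t) a
  have e := hv.anticomm s t h1 h2 h3 h4 hst
  simp only [H.add_mul', H.mul_add', ← H.alt_left, e, neg_mul'' H] at h
  rw [← sub_eq_zero] at h ⊢
  rw [← h]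
  abel

theorem sum_antisymm {ι : Type*} [Fintype ι] (B : ι → ι → A)
    (h : ∀ s t, s ≠ t → B s t = -B t s) : ∑ s, ∑ t, B s t = ∑ s, B s s := by
  classical
  have h1 : (2 : ℝ) • ∑ s, ∑ t, B s t = (2 : ℝ) • ∑ s, B s s := by
    have e : (2 : ℝ) • ∑ s, ∑ t, B s t = ∑ s, ∑ t, (B s t + B t s) := by
      rw [two_smul]
      conv_lhs => rw [add_comm]; arg 1; rw [Finset.sum_comm]
      simp only [Finset.sum_add_distrib]
      rw [add_comm]
    rw [e, Finset.smul_sum]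
    refine Finset.sum_congr rfl fun s _ => ?_
    rw [Finset.sum_eq_single s]
    · rw [two_smul]
    · intro t _ hts
      rw [h s t (Ne.symm hts)]; simp
    · simp
  exact smul_right_injective A (two_ne_zero' ℝ) h1

theorem emb_mul (H : IsAltStarAlg A conj) (w : Fin (m + 1) → ℝ) (a : A) :
    emb v m w * a = ∑ s : Fin (m + 1), w s • (v s * a) := by
  simp only [emb, sum_mul'' H, H.smul_mul']

theorem emb_emb (H : IsAltStarAlg A conj) (hv : IsHypBasis A conj v m)
    (w : Fin (m + 1) → ℝ) (hw : w 0 = 0) (a : A) :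
    emb v m w * (emb v m w * a) = -((∑ s, w s ^ 2) • a) := by
  simp only [emb_mul H, mul_sum'' H, H.mul_smul', Finset.smul_sum]
  have hpos : ∀ s : Fin (m + 1), s ≠ 0 → 1 ≤ (s : ℕ) := fun s hs =>
    Nat.one_le_iff_ne_zero.2 fun h => hs (Fin.ext h)
  have hle : ∀ s : Fin (m + 1), (s : ℕ) ≤ m := fun s => Nat.lt_succ_iff.1 s.2
  rw [sum_antisymm, Finset.sum_smul, ← Finset.sum_neg_distrib]
  · refine Finset.sum_congr rfl fun s _ => ?_
    by_cases hs : s = 0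
    · subst hs; simp [hw]
    · rw [v_sq_mul H hv (hpos s hs) (hle s), smul_neg, smul_neg, smul_smul, pow_two]
  · intro s t hst
    by_cases hs : s = 0
    · subst hs; simp [hw]
    by_cases ht : t = 0
    · subst ht; simp [hw]
    rw [v_anti H hv (hpos s hs) (hle s) (hpos t ht) (hle t) (fun h => hst (Fin.ext h)),
      smul_neg, smul_neg, smul_comm]

theorem v_emb_xq (H : IsAltStarAlg A conj) (hv : IsHypBasis A conj v m) {p : ℕ}
    (x : Fin (m + 1) → ℝ) {s : ℕ} (h1 : 1 ≤ s) (h2 : s ≤ p) (hp : p < m) (a : A) :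
    v s * (emb v m (xqpart m p x) * a) = -(emb v m (xqpart m p x) * (v s * a)) := by
  simp only [emb_mul H, mul_sum'' H, H.mul_smul', ← Finset.sum_neg_distrib]
  refine Finset.sum_congr rfl fun t _ => ?_
  by_cases ht : (t : ℕ) ≤ p
  · simp [xqpart, ht]
  · rw [v_anti H hv h1 (by omega) (by omega) (Nat.lt_succ_iff.1 t.2) (by omega), smul_neg]

/-- the sign of the conjugate operator -/
noncomputable def sgn (s : ℕ) : ℝ := if s = 0 then 1 else -1

theorem Dbarop_eq (H : IsAltStarAlg A conj) (hv : IsHypBasis A conj v m)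
    (f : (Fin (m + 1) → ℝ) → A) (x : Fin (m + 1) → ℝ) :
    Dbarop v m m f x = ∑ s : Fin (m + 1), sgn s • (v s * pdF m s f x) := by
  simp only [Dbarop]
  rw [Fin.sum_univ_succ, Fin.sum_univ_succ]
  simp [sgn, hv.v_zero, H.one_mul', sub_eq_add_neg]

theorem DbaropP_eq (H : IsAltStarAlg A conj) (hv : IsHypBasis A conj v m) (p : ℕ)
    (f : (Fin (p + 1) → ℝ) → A) :
    DbaropP v p f = cop p (fun s => sgn s • mulL H (v s)) f := by
  ext x
  simp only [DbaropP, cop]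
  rw [Fin.sum_univ_succ, Fin.sum_univ_succ]
  simp [sgn, hv.v_zero, H.one_mul', sub_eq_add_neg, mulL_apply]

theorem DopP_eq (H : IsAltStarAlg A conj) (p : ℕ) (f : (Fin (p + 1) → ℝ) → A) :
    DopP v p f = cop p (fun s => mulL H (v s)) f := by
  ext x
  simp only [DopP, cop, mulL_apply]

theorem D_Dbar (H : IsAltStarAlg A conj) (hv : IsHypBasis A conj v m) {p : ℕ} (hp : p < m)
    {Ω : Set (Fin (p + 1) → ℝ)} {f : (Fin (p + 1) → ℝ) → A}
    (hf : AnalyticOnNhd ℝ f Ω) : Set.EqOn (DopP v p (DbaropP v p f)) (lapP p f) Ω := by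
  have := H.finDim
  have : CompleteSpace A := FiniteDimensional.complete ℝ A
  intro y hy
  rw [DbaropP_eq H hv]
  simp only [DopP, lapP]
  have h1 : ∀ s : Fin (p + 1), v s * pdP p s (cop p (fun s => sgn s • mulL H (v s)) f) y =
      ∑ t : Fin (p + 1), sgn t • (v s * (v t * pdP p t (pdP p s f) y)) := by
    intro s
    rw [pdP_cop _ hf s hy]
    simp [cop, mul_sum'' H, mulL_apply, H.mul_smul']
  simp only [h1]
  have hpos : ∀ s : Fin (p + 1), s ≠ 0 → 1 ≤ (s : ℕ) := fun s hs =>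
    Nat.one_le_iff_ne_zero.2 fun h => hs (Fin.ext h)
  have hne : ∀ s : Fin (p + 1), s ≠ 0 → sgn s = -1 := fun s hs => by
    have := hpos s hs
    simp only [sgn]; rw [if_neg (by omega)]
  have hle : ∀ s : Fin (p + 1), (s : ℕ) ≤ m := fun s => by have := s.2; omega
  have h0 : sgn ((0 : Fin (p + 1)) : ℕ) = 1 := by simp [sgn]
  have hv0 : ∀ a : A, v ((0 : Fin (p + 1)) : ℕ) * a = a := fun a => by
    simp [hv.v_zero, H.one_mul']
  rw [sum_antisymm]
  · refine Finset.sum_congr rfl fun s _ => ?_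
    by_cases hs : s = 0
    · subst hs; rw [h0, hv0, hv0, one_smul]
    · rw [v_sq_mul H hv (hpos s hs) (hle s), hne s hs, neg_one_smul, neg_neg]
  · intro s t hst
    rw [pdP_comm hf s t hy]
    by_cases hs : s = 0
    · subst hs
      rw [h0, hv0, hv0, one_smul, hne t (Ne.symm hst), neg_one_smul]
    by_cases ht : t = 0
    · subst ht
      rw [h0, hv0, hv0, one_smul, hne s hst, neg_one_smul, neg_neg]
    rw [v_anti H hv (hpos s hs) (hle s) (hpos t ht) (hle t) (fun h => hst (Fin.ext h)),
      hne s hs, hne t ht, smul_neg]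
end Alg

section Main
variable {A : Type*} [NormedAddCommGroup A] [NormedSpace ℝ A]

theorem projP_single {m p : ℕ} (hp : p < m) (s : Fin (m + 1)) :
    projP m p (Pi.single s 1) =
      if h : (s : ℕ) < p + 1 then Pi.single (⟨(s : ℕ), h⟩ : Fin (p + 1)) (1 : ℝ) else 0 := by
  ext t
  have ht : (t : ℕ) < m + 1 := by have := t.2; omega
  simp only [projP, ht, dif_pos]
  split
  · simp only [Pi.single_apply, Fin.ext_iff]
  · rw [Pi.single_apply, if_neg]
    · rfl
    · intro h
      have := congrArg Fin.val h
      have := t.2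
      simp at *
      omega

theorem drsq_single {m p : ℕ} (x : Fin (m + 1) → ℝ) (s : Fin (m + 1)) :
    drsq m p x (Pi.single s 1) = 2 * xqpart m p x s := by
  rw [drsq_apply, Finset.sum_eq_single s]
  · simp
  · intro t _ hts; simp [Pi.single_apply, hts]
  · simp

theorem sum_red {m p : ℕ} (hp : p < m) (φ : ℕ → A →L[ℝ] A) (g : (Fin (p + 1) → ℝ) → A)
    (y : Fin (p + 1) → ℝ) :
    ∑ s : Fin (m + 1), φ s (fderiv ℝ g y (projP m p (Pi.single s 1))) =
      cop p (fun s => φ s) g y := by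
  set ψ : ℕ → A := fun n => if h : n < p + 1 then
    φ n (fderiv ℝ g y (Pi.single (⟨n, h⟩ : Fin (p + 1)) (1 : ℝ))) else 0 with hψ
  have h1 : ∀ s : Fin (m + 1), φ s (fderiv ℝ g y (projP m p (Pi.single s 1))) = ψ s := by
    intro s
    rw [projP_single hp]
    simp only [hψ]
    split <;> simp
  have h2 : cop p (fun s => φ s) g y = ∑ s : Fin (p + 1), ψ s := by
    simp only [cop, pdP]
    refine Finset.sum_congr rfl fun s _ => ?_
    simp only [hψ, s.2, dif_pos]
  rw [h2, Finset.sum_congr rfl fun s _ => h1 s, Fin.sum_univ_eq_sum_range ψ,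
    Fin.sum_univ_eq_sum_range ψ]
  symm
  refine Finset.sum_subset (Finset.range_subset_range.2 (by omega)) fun n _ hn => ?_
  simp only [Finset.mem_range] at hn
  simp only [hψ, hn, dif_neg, not_false_eq_true]

variable [CompleteSpace A]
variable {m p : ℕ} {L : ℕ → (Fin (p + 1) → ℝ) → A} {y₀ : Fin (p + 1) → ℝ} {δ C Q : ℝ}
  {c : ℕ → ℝ}

/-- the series -/
noncomputable def Fser (m p : ℕ) (c : ℕ → ℝ) (L : ℕ → (Fin (p + 1) → ℝ) → A)
    (x : Fin (m + 1) → ℝ) : A := ∑' k, (c k * rsq m p x ^ k) • L k (projP m p x)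

/-- the radial derivative series -/
noncomputable def Sser (m p : ℕ) (c : ℕ → ℝ) (L : ℕ → (Fin (p + 1) → ℝ) → A)
    (x : Fin (m + 1) → ℝ) : A :=
  ∑' k, (c k * (k * rsq m p x ^ (k - 1))) • L k (projP m p x)

/-- the `x_p`-part of the partial derivative -/
noncomputable def Pser (m p : ℕ) (c : ℕ → ℝ) (L : ℕ → (Fin (p + 1) → ℝ) → A)
    (x : Fin (m + 1) → ℝ) (s : Fin (m + 1)) : A :=
  pdF m s (Fser m p c L) x - (2 * xqpart m p x s) • Sser m p c L x

theorem LocData.hasSum_P (H : LocData p L y₀ δ C Q)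
    (hc : ∀ k, |c k| * (2 * k).factorial ≤ 1) {x : Fin (m + 1) → ℝ}
    (hx : projP m p x ∈ Metric.ball y₀ δ) (hr : rad m p x < δ) (s : Fin (m + 1)) :
    HasSum (fun k => (c k * rsq m p x ^ k) •
      fderiv ℝ (L k) (projP m p x) (projP m p (Pi.single s 1))) (Pser m p c L x s) := by
  have h1 := H.hasSum hc hx hr (Pi.single s 1)
  have h2 := (H.summable_S hc hx hr).hasSum.const_smul (2 * xqpart m p x s)
  refine (h1.sub h2).congr_fun ?_
  intro k
  rw [drsq_single, smul_smul, mul_comm (2 * xqpart m p x s), add_sub_cancel_right]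

theorem LocData.P_zero (H : LocData p L y₀ δ C Q) (hp : p < m)
    (hc : ∀ k, |c k| * (2 * k).factorial ≤ 1) {x : Fin (m + 1) → ℝ}
    (hx : projP m p x ∈ Metric.ball y₀ δ) (hr : rad m p x < δ) (s : Fin (m + 1))
    (hs : p < (s : ℕ)) : Pser m p c L x s = 0 := by
  have h := H.hasSum_P hc hx hr s
  refine h.unique ?_
  rw [projP_single hp, dif_neg (by omega)]
  simpa using (hasSum_zero : HasSum (fun _ : ℕ => (0 : A)) 0)

theorem LocData.hasSum_cop (H : LocData p L y₀ δ C Q) (hp : p < m)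
    (hc : ∀ k, |c k| * (2 * k).factorial ≤ 1) {x : Fin (m + 1) → ℝ}
    (hx : projP m p x ∈ Metric.ball y₀ δ) (hr : rad m p x < δ) (φ : ℕ → A →L[ℝ] A) :
    HasSum (fun k => (c k * rsq m p x ^ k) • cop p (fun s => φ s) (L k) (projP m p x))
      (∑ s : Fin (m + 1), φ s (Pser m p c L x s)) := by
  have h := hasSum_sum (s := Finset.univ) fun (s : Fin (m + 1)) _ =>
    (H.hasSum_P hc hx hr s).mapL (φ s)
  refine h.congr_fun ?_
  intro k
  rw [← sum_red hp φ, Finset.smul_sum]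
  simp only [map_smul]

theorem pdF_eq (x : Fin (m + 1) → ℝ) (s : Fin (m + 1)) :
    pdF m s (Fser m p c L) x = Pser m p c L x s + (2 * xqpart m p x s) • Sser m p c L x := by
  simp [Pser]

end Main

section Main2
variable {A : Type*} [NormedAddCommGroup A] [NormedSpace ℝ A] [Mul A] [One A] {conj : A → A}
variable {v : ℕ → A} {m p : ℕ} {f : (Fin (p + 1) → ℝ) → A} {y₀ : Fin (p + 1) → ℝ} {δ C Q : ℝ}

theorem lapIterP_zero_fun (k : ℕ) : lapIterP p k (0 : (Fin (p + 1) → ℝ) → A) = 0 := by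
  have h1 : ∀ s, pdP p s (0 : (Fin (p + 1) → ℝ) → A) = 0 := by
    intro s; ext y
    have : fderiv ℝ (0 : (Fin (p + 1) → ℝ) → A) y = 0 := by
      exact (hasFDerivAt_const (0 : A) y).fderiv
    simp [pdP, this]
  have h2 : lapP p (0 : (Fin (p + 1) → ℝ) → A) = 0 := by
    ext y; simp [lapP, h1]
  induction k with
  | zero => rfl
  | succ k ih => rw [lapIterP_succ', ih, h2]

theorem HGCKe_left (H : IsAltStarAlg A conj) :
    HGCKe v m p f 0 = Fser m p (fun k => hgckC (m - p) k 1) (fun k => lapIterP p k f) := by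
  ext x
  simp only [HGCKe, Fser, lapIterP_zero_fun, Pi.zero_apply, smul_zero, tsum_zero, mul_zero'' H,
    add_zero]
  refine tsum_congr fun k => ?_
  rw [hgckC_factor, rad_sq]

theorem HGCKe_right (H : IsAltStarAlg A conj) :
    HGCKe v m p 0 f = fun x => emb v m (xqpart m p x) *
      Fser m p (fun k => hgckC' (m - p) k 1) (fun k => lapIterP p k f) x := by
  ext x
  simp only [HGCKe, Fser, lapIterP_zero_fun, Pi.zero_apply, smul_zero, tsum_zero, zero_add]
  congr 1
  refine tsum_congr fun k => ?_
  rw [hgckC'_factor, rad_sq]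

theorem xq_zero (x : Fin (m + 1) → ℝ) : xqpart m p x 0 = 0 := by simp [xqpart]

theorem sgn_xq (x : Fin (m + 1) → ℝ) (s : Fin (m + 1)) :
    sgn s * xqpart m p x s = -xqpart m p x s := by
  by_cases hs : (s : ℕ) = 0
  · have : s = 0 := Fin.ext hs
    subst this; simp [xq_zero]
  · simp [sgn, hs]

theorem main_left (H : IsAltStarAlg A conj) (hv : IsHypBasis A conj v m) (hp : p < m)
    {Ω : Set (Fin (p + 1) → ℝ)} (hΩ : IsOpen Ω) (hf : AnalyticOnNhd ℝ f Ω)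
    (HL : LocData p (fun k => lapIterP p k f) y₀ δ C Q) (hsub : Metric.ball y₀ δ ⊆ Ω)
    {x : Fin (m + 1) → ℝ} (hx : projP m p x ∈ Metric.ball y₀ δ) (hr : rad m p x < δ) :
    Dbarop v m m (HGCKe v m p f 0) x = GCKe v m p (DbaropP v p f) x := by
  have := H.finDim
  have : CompleteSpace A := FiniteDimensional.complete ℝ A
  have hq : 0 < m - p := by omega
  have hy : projP m p x ∈ Ω := hsub hx
  set c : ℕ → ℝ := fun k => hgckC (m - p) k 1 with hcdef
  have hc : ∀ k, |c k| * (2 * k).factorial ≤ 1 := hgckC_bound hq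
  set L : ℕ → (Fin (p + 1) → ℝ) → A := fun k => lapIterP p k f with hL
  rw [HGCKe_left H, Dbarop_eq H hv]
  have hS := HL.summable_S hc hx hr
  have h1 := (HL.hasSum_cop hp hc hx hr (fun s => sgn s • mulL H (v s))).tsum_eq
  have e1 : ∑ s : Fin (m + 1), sgn s • (v s * pdF m s (Fser m p c L) x) =
      ∑ s : Fin (m + 1), (sgn s • mulL H (v s)) (Pser m p c L x s) +
        emb v m (xqpart m p x) * ((-2 : ℝ) • Sser m p c L x) := by
    rw [emb_mul H, ← Finset.sum_add_distrib]
    refine Finset.sum_congr rfl fun s _ => ?_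
    rw [pdF_eq, H.mul_add', smul_add]
    congr 1
    simp only [H.mul_smul', smul_smul]
    congr 1
    have := sgn_xq (p := p) x s
    linear_combination 2 * this
  rw [e1, ← h1]
  simp only [GCKe]
  congr 1
  · refine tsum_congr fun k => ?_
    rw [hgckC_factor, rad_sq, DbaropP_eq H hv, lapIterP_cop hΩ _ hf k hy]
  · congr 1
    rw [Sser, hS.tsum_eq_zero_add]
    simp only [Nat.cast_zero, zero_mul, mul_zero, zero_smul, zero_add]
    rw [← tsum_const_smul'']
    refine tsum_congr fun k => ?_
    rw [lapIterP_congr hΩ (D_Dbar H hv hp hf) k hy, smul_smul]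
    have h2 := hgckC_shift hq k (rad m p x)
    rw [rad_sq] at h2
    have : (-2 : ℝ) * (c (k + 1) * (((k + 1 : ℕ) : ℝ) * rsq m p x ^ (k + 1 - 1))) =
        gckC' (m - p) k (rad m p x) := by
      simp only [Nat.add_sub_cancel, hcdef]
      push_cast
      linear_combination -h2
    rw [this]
    rfl

theorem hasFDerivAt_emb_mul (H : IsAltStarAlg A conj) {G : (Fin (m + 1) → ℝ) → A}
    {x : Fin (m + 1) → ℝ} (hG : DifferentiableAt ℝ G x) (s : Fin (m + 1)) :
    pdF m s (fun x => emb v m (xqpart m p x) * G x) x =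
      (if (s : ℕ) ≤ p then 0 else v s * G x) + emb v m (xqpart m p x) * pdF m s G x := by
  have e : (fun x => emb v m (xqpart m p x) * G x) =
      fun x => ∑ t : Fin (m + 1), xqpart m p x t • mulL H (v t) (G x) := by
    ext x; rw [emb_mul H]; simp only [mulL_apply]
  have h1 : ∀ t : Fin (m + 1), HasFDerivAt (fun x => xqpart m p x t • mulL H (v t) (G x))
      (xqpart m p x t • (mulL H (v t)).comp (fderiv ℝ G x) +
        ((if (t : ℕ) ≤ p then (0 : (Fin (m + 1) → ℝ) →L[ℝ] ℝ)
          else ContinuousLinearMap.proj t)).smulRight (mulL H (v t) (G x))) x := by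
    intro t
    have h2 : HasFDerivAt (fun x => xqpart m p x t)
        (if (t : ℕ) ≤ p then (0 : (Fin (m + 1) → ℝ) →L[ℝ] ℝ)
          else ContinuousLinearMap.proj t) x := by
      simp only [xqpart]
      split
      · exact hasFDerivAt_const _ _
      · exact (ContinuousLinearMap.proj (R := ℝ) (φ := fun _ : Fin (m + 1) => ℝ) t).hasFDerivAt
    exact h2.smul ((mulL H (v t)).hasFDerivAt.comp x hG.hasFDerivAt)
  have h3 := HasFDerivAt.fun_sum (u := Finset.univ) fun t _ => h1 t
  rw [e, pdF, h3.fderiv, emb_mul H]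
  simp only [sum_apply, add_apply, smul_apply,
    ContinuousLinearMap.smulRight_apply, ContinuousLinearMap.comp_apply, mulL_apply,
    Finset.sum_add_distrib]
  rw [add_comm]
  congr 1
  rw [Finset.sum_eq_single s]
  · split <;> simp
  · intro t _ hts
    split
    · simp
    · simp [Pi.single_apply, hts]
  · simp

theorem card_q (hp : p < m) (a : A) :
    ∑ s : Fin (m + 1), (if (s : ℕ) ≤ p then 0 else a) = ((m - p : ℕ) : ℝ) • a := by
  rw [Fin.sum_univ_eq_sum_range (fun n => if n ≤ p then 0 else a)]
  rw [show m + 1 = (p + 1) + (m - p) by omega, Finset.sum_range_add]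
  rw [Finset.sum_eq_zero, zero_add, Finset.sum_congr rfl (g := fun _ => a)]
  · simp [Nat.cast_smul_eq_nsmul]
  · intro n _; rw [if_neg (by omega)]
  · intro n hn; rw [if_pos (by simp at hn; omega)]

theorem main_right (H : IsAltStarAlg A conj) (hv : IsHypBasis A conj v m) (hp : p < m)
    {Ω : Set (Fin (p + 1) → ℝ)} (hΩ : IsOpen Ω) (hf : AnalyticOnNhd ℝ f Ω)
    (HL : LocData p (fun k => lapIterP p k f) y₀ δ C Q) (hsub : Metric.ball y₀ δ ⊆ Ω)
    {x : Fin (m + 1) → ℝ} (hx : projP m p x ∈ Metric.ball y₀ δ) (hr : rad m p x < δ) :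
    Dbarop v m m (HGCKe v m p 0 f) x = ((m - p : ℕ) : ℝ) • GCKe v m p f x := by
  have := H.finDim
  have : CompleteSpace A := FiniteDimensional.complete ℝ A
  have hq : 0 < m - p := by omega
  have hy : projP m p x ∈ Ω := hsub hx
  set q := m - p with hqdef
  set c : ℕ → ℝ := fun k => hgckC' (m - p) k 1 with hcdef
  have hc : ∀ k, |c k| * (2 * k).factorial ≤ 1 := hgckC'_bound _
  set L : ℕ → (Fin (p + 1) → ℝ) → A := fun k => lapIterP p k f with hL
  rw [HGCKe_right H, Dbarop_eq H hv]
  have hS := HL.summable_S hc hx hr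
  have hF := HL.summable_val hc hx hr
  have hd : DifferentiableAt ℝ (Fser m p c L) x := (HL.hasFDerivAt hc hx hr).differentiableAt
  have h1 := (HL.hasSum_cop hp hc hx hr (fun s => mulL H (v s))).tsum_eq
  set e := emb v m (xqpart m p x) with he
  have hle : ∀ s : Fin (m + 1), (s : ℕ) ≤ m := fun s => Nat.lt_succ_iff.1 s.2
  have key : ∀ s : Fin (m + 1),
      sgn s • (v s * pdF m s (fun x => emb v m (xqpart m p x) * Fser m p c L x) x) =
      (if (s : ℕ) ≤ p then 0 else Fser m p c L x) + mulL H e (mulL H (v s) (Pser m p c L x s)) +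
        xqpart m p x s • (v s * (e * ((-2 : ℝ) • Sser m p c L x))) := by
    intro s
    rw [hasFDerivAt_emb_mul H hd s, pdF_eq, ← he, H.mul_add', H.mul_add', H.mul_add',
      smul_add, smul_add, add_assoc]
    congr 1
    · split
      · simp [mul_zero'' H]
      · rename_i hs
        rw [v_sq_mul H hv (by omega) (hle s)]
        simp only [sgn]
        rw [if_neg (by omega), neg_one_smul, neg_neg]
    congr 1
    · simp only [mulL_apply]
      by_cases hs : p < (s : ℕ)
      · rw [HL.P_zero hp hc hx hr s hs]; simp [mul_zero'' H]
      by_cases hs0 : (s : ℕ) = 0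
      · simp [sgn, hs0, hv.v_zero, H.one_mul']
      · rw [he, v_emb_xq H hv x (by omega) (by omega) hp]
        simp [sgn, hs0]
    · simp only [H.mul_smul', smul_smul]
      congr 1
      have := sgn_xq (p := p) x s
      linear_combination 2 * this
  rw [Finset.sum_congr rfl fun s _ => key s, Finset.sum_add_distrib, Finset.sum_add_distrib,
    card_q hp, ← map_sum, ← emb_mul H, emb_emb H hv _ (xq_zero x), ← h1, mulL_apply]
  change _ + _ + -(rsq m p x • _) = _
  simp only [GCKe]
  rw [smul_add, ← H.mul_smul', ← he, add_right_comm]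
  congr 1
  · rw [Fser, Sser, smul_smul, ← neg_smul, ← hF.tsum_const_smul, ← hS.tsum_const_smul,
      ← (hF.const_smul _).tsum_add (hS.const_smul _), ← tsum_const_smul'']
    refine tsum_congr fun k => ?_
    rw [smul_smul, smul_smul, smul_smul, ← add_smul]
    congr 1
    rw [hgckC_factor, rad_sq]
    have h2 := hgckC'_hgckC hq k
    have h3 : (k : ℝ) * rsq m p x * rsq m p x ^ (k - 1) = k * rsq m p x ^ k := by
      rcases k with _ | k
      · simp
      · simp only [Nat.add_sub_cancel]; ring
    simp only [hcdef, ← hqdef]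
    linear_combination (rsq m p x ^ k) * h2 + 2 * hgckC' q k 1 * h3
  · congr 1
    rw [← tsum_const_smul'']
    refine tsum_congr fun k => ?_
    rw [smul_smul, ← hgckC'_eq hq, hgckC'_factor, rad_sq, DopP_eq H, lapIterP_cop hΩ _ hf k hy]

end Main2

section Topo

theorem preconn_of_base {E : Type*} [AddCommGroup E] [Module ℝ E] [TopologicalSpace E]
    [IsTopologicalAddGroup E] [ContinuousSMul ℝ E] {S B : Set E} (hB : IsConnected B)
    (hBS : B ⊆ S) (h : ∀ z ∈ S, ∃ b ∈ B, segment ℝ b z ⊆ S) : IsConnected S := by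
  obtain ⟨b₀, hb₀⟩ := hB.nonempty
  refine ⟨⟨b₀, hBS hb₀⟩, isPreconnected_of_forall b₀ fun z hz => ?_⟩
  obtain ⟨b, hb, hseg⟩ := h z hz
  refine ⟨B ∪ segment ℝ b z, Set.union_subset hBS hseg, Or.inl hb₀,
    Or.inr (right_mem_segment ℝ b z), ?_⟩
  exact hB.isPreconnected.union b hb (left_mem_segment ℝ b z)
    (convex_segment b z).isPreconnected

variable {m p : ℕ}

theorem projP_injP (hp : p < m) (y : Fin (p + 1) → ℝ) : projP m p (injP m p y) = y := by
  ext s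
  have := s.2
  have h : (s : ℕ) < m + 1 := by omega
  simp only [projP, injP, h, this, dif_pos]

theorem continuous_injP : Continuous (injP m p) := by
  refine continuous_pi fun s => ?_
  simp only [injP]
  split
  · exact continuous_apply _
  · exact continuous_const

theorem continuous_projP : Continuous (projP m p) := by
  have : (projP m p) = projL m p := by ext x : 1; rw [projL_apply]
  rw [this]; exact (projL m p).continuous

theorem projP_add (x y : Fin (m + 1) → ℝ) : projP m p (x + y) = projP m p x + projP m p y := by
  simp only [← projL_apply, map_add]

theorem projP_smul (c : ℝ) (x : Fin (m + 1) → ℝ) : projP m p (c • x) = c • projP m p x := by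
  simp only [← projL_apply, map_smul]

theorem projP_low (w : Fin (m + 1) → ℝ) (hw : ∀ s : Fin (m + 1), (s : ℕ) ≤ p → w s = 0) :
    projP m p w = 0 := by
  ext s
  simp only [projP]
  split
  · exact hw _ (Nat.lt_succ_iff.1 s.2)
  · rfl

theorem projP_xppart (x : Fin (m + 1) → ℝ) : projP m p (xppart m p x) = projP m p x := by
  ext s
  simp only [projP, xppart, Nat.lt_succ_iff.1 s.2, if_true]

theorem rad_eq_of (x y : Fin (m + 1) → ℝ) (c : ℝ)
    (h : ∀ s : Fin (m + 1), xqpart m p x s = c * xqpart m p y s) :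
    rad m p x = |c| * rad m p y := by
  simp only [rad, h, mul_pow, ← Finset.mul_sum]
  rw [Real.sqrt_mul (sq_nonneg c), Real.sqrt_sq_eq_abs]

theorem xq_injP (y : Fin (p + 1) → ℝ) : xqpart m p (injP m p y) = 0 := by
  ext s
  simp only [xqpart, injP, Pi.zero_apply]
  split
  · rfl
  · rw [dif_neg (by omega)]

theorem rad_injP (y : Fin (p + 1) → ℝ) : rad m p (injP m p y) = 0 := by
  simp [rad, xq_injP]

end Topo

section Topo2
variable {A : Type*} [NormedAddCommGroup A] [NormedSpace ℝ A] [Mul A] [One A] {conj : A → A}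
variable {v : ℕ → A} {m p : ℕ}

theorem one_ne (hv : IsHypBasis A conj v m) : (1 : A) ≠ 0 := by
  have h := hv.indep.ne_zero 0
  rw [← hv.v_zero]
  simpa using h

theorem rad_sph (H : IsAltStarAlg A conj) (hv : IsHypBasis A conj v m)
    {w : Fin (m + 1) → ℝ} (hw : w ∈ Sph v m p) : rad m p w = 1 := by
  obtain ⟨h0, h1⟩ := hw
  have hone : (1 : A) ≠ 0 := one_ne hv
  have h2 := emb_emb H hv w (h0 0 (Nat.zero_le _)) 1
  rw [H.mul_one', h1, neg_inj] at h2
  have h3 : (∑ s, w s ^ 2) = 1 := by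
    have : ((∑ s, w s ^ 2) - 1) • (1 : A) = 0 := by rw [sub_smul, one_smul, ← h2, sub_self]
    rcases smul_eq_zero.1 this with h | h
    · linarith
    · exact absurd h hone
  have h4 : ∀ s, xqpart m p w s = w s := by
    intro s
    simp only [xqpart]
    split
    · rename_i hs; rw [h0 s hs]
    · rfl
  simp [rad, h4, h3]

/-- The domain on which the series converge. -/
def goodSet (m p : ℕ) (f : (Fin (p + 1) → ℝ) → A) (Ω₀ : Set (Fin (p + 1) → ℝ)) :
    Set ((Fin (p + 1) → ℝ) × ℝ) :=
  {z | ∃ y₀ δ C Q, LocData p (fun k => lapIterP p k f) y₀ δ C Q ∧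
    Metric.ball y₀ δ ⊆ Ω₀ ∧ z.1 ∈ Metric.ball y₀ δ ∧ z.2 < δ}

theorem goodSet_open (f : (Fin (p + 1) → ℝ) → A) (Ω₀ : Set (Fin (p + 1) → ℝ)) :
    IsOpen (goodSet m p f Ω₀) := by
  rw [isOpen_iff_mem_nhds]
  rintro ⟨y, r⟩ ⟨y₀, δ, C, Q, h1, h2, h3, h4⟩
  have : Metric.ball y₀ δ ×ˢ Set.Iio δ ∈ 𝓝 (y, r) :=
    (Metric.isOpen_ball.prod isOpen_Iio).mem_nhds ⟨h3, h4⟩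
  filter_upwards [this] with z hz
  exact ⟨y₀, δ, C, Q, h1, h2, hz.1, hz.2⟩

theorem goodSet_mono {f : (Fin (p + 1) → ℝ) → A} {Ω₀ : Set (Fin (p + 1) → ℝ)}
    {y : Fin (p + 1) → ℝ} {r r' : ℝ} (h : (y, r) ∈ goodSet m p f Ω₀) (hr : r' ≤ r) :
    (y, r') ∈ goodSet m p f Ω₀ := by
  obtain ⟨y₀, δ, C, Q, h1, h2, h3, h4⟩ := h
  exact ⟨y₀, δ, C, Q, h1, h2, h3, lt_of_le_of_lt hr h4⟩

end Topo2

/-- `D̄_x (HGCK[f₀, 0]) = GCK[D̄_{x_p} f₀]` and `D̄_x (HGCK[0, f₀]) = q · GCK[f₀]`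
(on the p-symmetric slice domain where the extensions are defined). -/
theorem dbar_hgck_gck
    {A : Type*} [NormedAddCommGroup A] [NormedSpace ℝ A] [Mul A] [One A]
    (conj : A → A) (H : IsAltStarAlg A conj)
    (v : ℕ → A) (m p : ℕ) (hv : IsHypBasis A conj v m) (hp : p < m)
    (Ω₀ : Set (Fin (p + 1) → ℝ)) (hΩ₀ : IsOpen Ω₀) (hΩ₀conn : IsConnected Ω₀)
    (f₀ : (Fin (p + 1) → ℝ) → A) (hf₀ : AnalyticOnNhd ℝ f₀ Ω₀) :
    ∃ Ω : Set (Fin (m + 1) → ℝ),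
      PSym v m p Ω ∧ SliceDomain v m p Ω ∧
      injP m p '' Ω₀ ⊆ Ω ∧ Ω ⊆ Omega0star m p Ω₀ ∧
      (∀ x ∈ Ω,
        Dbarop v m m (HGCKe v m p f₀ 0) x = GCKe v m p (DbaropP v p f₀) x) ∧
      (∀ x ∈ Ω,
        Dbarop v m m (HGCKe v m p 0 f₀) x = (((m - p : ℕ) : ℝ)) • GCKe v m p f₀ x) := by
  have := H.finDim
  have : CompleteSpace A := FiniteDimensional.complete ℝ A
  set G := goodSet m p f₀ Ω₀ with hG
  set Ω : Set (Fin (m + 1) → ℝ) := {x | (projP m p x, rad m p x) ∈ G} with hΩ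
  have hbase : ∀ y ∈ Ω₀, (y, (0 : ℝ)) ∈ G := by
    intro y hy
    obtain ⟨δ, C, Q, h1, h2⟩ := locData_exists hΩ₀ hf₀ hy
    exact ⟨y, δ, C, Q, h1, h2, Metric.mem_ball_self h1.dpos, h1.dpos⟩
  have hfst : ∀ z ∈ G, z.1 ∈ Ω₀ := by
    rintro z ⟨y₀, δ, C, Q, h1, h2, h3, h4⟩
    exact h2 h3
  have hinj : ∀ y ∈ Ω₀, injP m p y ∈ Ω := by
    intro y hy
    change (_, _) ∈ G
    rw [projP_injP hp, rad_injP]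
    exact hbase y hy
  have hpt : ∀ w ∈ Sph v m p, ∀ y r, pt m p w y r ∈ Ω ↔ (y, |r|) ∈ G := by
    intro w hw y r
    have h1 : projP m p (pt m p w y r) = y := by
      rw [pt, projP_add, projP_smul, projP_low w hw.1, smul_zero, add_zero, projP_injP hp]
    have h2 : rad m p (pt m p w y r) = |r| := by
      rw [rad_eq_of (pt m p w y r) w r, rad_sph H hv hw, mul_one]
      intro s
      have := congrFun (xq_injP (m := m) y) s
      simp only [xqpart, pt, Pi.add_apply, Pi.smul_apply, smul_eq_mul, Pi.zero_apply] at this ⊢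
      split
      · simp
      · rename_i hs
        rw [if_neg hs] at this
        rw [this, zero_add]
    change (_, _) ∈ G ↔ _
    rw [h1, h2]
  refine ⟨Ω, ?_, ⟨?_, ?_, ?_, ?_⟩, ?_, ?_, ?_, ?_⟩
  · intro x hx w hw
    change (_, _) ∈ G
    have h1 : projP m p (xppart m p x + rad m p x • w) = projP m p x := by
      rw [projP_add, projP_smul, projP_low w hw.1, smul_zero, add_zero, projP_xppart]
    have h2 : rad m p (xppart m p x + rad m p x • w) = rad m p x := by
      rw [rad_eq_of _ w (rad m p x), rad_sph H hv hw, mul_one, abs_of_nonneg (rad_nonneg x)]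
      intro s
      simp only [xqpart, xppart, Pi.add_apply, Pi.smul_apply, smul_eq_mul]
      split <;> simp
    rw [h1, h2]
    exact hx
  · exact (goodSet_open f₀ Ω₀).preimage (continuous_projP.prodMk continuous_rad)
  · refine preconn_of_base (hΩ₀conn.image _ continuous_injP.continuousOn)
      (Set.image_subset_iff.2 hinj) fun x hx => ?_
    refine ⟨_, ⟨projP m p x, hfst _ hx, rfl⟩, ?_⟩
    rintro _ ⟨a, b, ha, hb, hab, rfl⟩
    change (_, _) ∈ G
    have h1 : projP m p (a • injP m p (projP m p x) + b • x) = projP m p x := by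
      rw [projP_add, projP_smul, projP_smul, projP_injP hp, ← add_smul, hab, one_smul]
    rw [h1]
    refine goodSet_mono hx ?_
    rw [rad_eq_of _ x b, abs_of_nonneg hb]
    · have := rad_nonneg (p := p) x
      nlinarith
    · intro s
      have := congrFun (xq_injP (m := m) (projP m p x)) s
      simp only [xqpart, Pi.add_apply, Pi.smul_apply, smul_eq_mul, Pi.zero_apply] at this ⊢
      split
      · simp
      · rename_i hs
        rw [if_neg hs] at this
        rw [this, mul_zero, zero_add]
  · obtain ⟨y, hy⟩ := hΩ₀conn.nonempty
    exact ⟨_, hinj y hy, xq_injP y⟩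
  · intro w hw
    have hB : IsConnected (Ω₀ ×ˢ ({0} : Set ℝ)) := hΩ₀conn.prod isConnected_singleton
    refine preconn_of_base hB ?_ ?_
    · rintro ⟨y, r⟩ ⟨hy, hr⟩
      obtain rfl : r = 0 := hr
      refine (hpt w hw y 0).2 ?_
      rw [abs_zero]
      exact hbase y hy
    · rintro ⟨y, r⟩ hz
      have hz' := (hpt w hw y r).1 hz
      refine ⟨(y, 0), ⟨hfst (y, |r|) hz', rfl⟩, ?_⟩
      rintro _ ⟨a, b, ha, hb, hab, rfl⟩
      refine (hpt w hw _ _).2 ?_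
      have e : (a • (y, (0 : ℝ)) + b • (y, r)).1 = y := by
        simp [← add_smul, hab]
      rw [e]
      refine goodSet_mono hz' ?_
      have e2 : (a • (y, (0 : ℝ)) + b • (y, r)).2 = b * r := by simp
      rw [e2, abs_mul, abs_of_nonneg hb]
      exact mul_le_of_le_one_left (abs_nonneg r) (by linarith)
  · exact Set.image_subset_iff.2 hinj
  · intro x hx
    exact hfst _ hx
  · rintro x ⟨y₀, δ, C, Q, h1, h2, h3, h4⟩
    exact main_left H hv hp hΩ₀ hf₀ h1 h2 h3 h4
  · rintro x ⟨y₀, δ, C, Q, h1, h2, h3, h4⟩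
    exact main_right H hv hp hΩ₀ hf₀ h1 h2 h3 h4

end GPSM
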